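/- arXiv:1511.08348 — 7 statements merged into one kernel-verified Lean document; each statement's English description precedes it below -/
import Mathlib

section
/- Let k be a field and let Q be a finite connected quiver without sources or sinks which is not isomorphic to the c-crown for any c ≥ 1. Then for every m ≥ 1 the kernel of the linear map D_{m,m} : k(Q_m//Q_m) → k(Q_{m+1}//Q_{m+1}) is a one-dimensional k-vector space, spanned by the element Σ_{γ ∈ Q_m} (γ, γ). -/
/-!
The sign in `D_{m,m}` is `(-1)^(2m+1) = -1`, so `D_{m,m} = L - R`, where `L` appends and `R`
prepends one and the same arrow to both members of a parallel pair. Since appending (prepending)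
is injective, the coefficient of `L c` at an appended pair `(aγ, aβ)` is the coefficient of `c` at
`(γ, β)`, and it vanishes at every pair whose last arrows differ; similarly for `R`. Both `L` and
`R` send the diagonal element to the diagonal element, which is therefore in the kernel.

Conversely let `L c = R c`. Appending an arrow `a` to `(γ, β)` shows that the coefficient
`c (γ, β)` vanishes if the first arrows of `(aγ, aβ)` differ, and otherwise
equals the coefficient at the pair obtained from `(γ, β)` by appending `a` and deleting the common
first arrow. Iterating along a path `y` of length `m` starting at the common target
(`exists_slide`), the window slides over the whole of `γ` and `β`: if no step makes the
coefficient vanish, then `γ` and `β` are both equal to the deleted prefix, so `γ = β`, and moreover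
`c (γ, γ) = c (y, y)` (`coeff_slide`). Hence `c` is supported on the diagonal, and all paths of
length `m` starting or ending at a vertex `v` have the same diagonal coefficient. A single slide
along an arrow `v ⟶ w` shows that the values at `v` and `w` agree, and connectedness
finishes the proof.
-/

open Quiver

/-- Pairs of parallel paths: a path `γ` of length `m` and a path `β` of length `p`
with the same source and the same target.  This is the set `Q_m // Q_p`. -/
structure ParPair (V : Type) [Quiver V] (m p : ℕ) where
  src : V
  tgt : V
  γ : Quiver.Path src tgt
  β : Quiver.Path src tgt
  hγ : γ.length = m
  hβ : β.length = p

instance pathFinite (V : Type) [Quiver V] [Fintype V] [∀ a b : V, Fintype (a ⟶ b)]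
    (n : ℕ) (a b : V) : Finite {p : Quiver.Path a b // p.length = n} := by
  induction n generalizing b with
  | zero =>
      have : Subsingleton {p : Quiver.Path a b // p.length = 0} := by
        constructor
        rintro ⟨p, hp⟩ ⟨q, hq⟩
        cases p with
        | nil =>
            cases q with
            | nil => rfl
            | cons q e => simp at hq
        | cons p e => simp at hp
      infer_instance
  | succ n ih =>
      haveI : ∀ c : V, Finite {p : Quiver.Path a c // p.length = n} := ih
      exact Finite.of_surjective
        (fun x : Σ c : V, {p : Quiver.Path a c // p.length = n} × (c ⟶ b) =>
          (⟨x.2.1.1.cons x.2.2, by simp [x.2.1.2]⟩ :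
            {p : Quiver.Path a b // p.length = n + 1}))
        (by
          rintro ⟨p, hp⟩
          cases p with
          | nil => simp at hp
          | cons q e => exact ⟨⟨_, ⟨q, by simpa using hp⟩, e⟩, rfl⟩)

noncomputable instance pathFintype (V : Type) [Quiver V] [Fintype V]
    [∀ a b : V, Fintype (a ⟶ b)] (n : ℕ) (a b : V) :
    Fintype {p : Quiver.Path a b // p.length = n} := Fintype.ofFinite _

/-- The linear map `D_{m,p} : k(Q_m//Q_p) → k(Q_{m+1}//Q_{p+1})` given on basis elements
by `D_{m,p}(γ, β) = Σ_{a} (aγ, aβ) + (−1)^{p+m+1} Σ_{a} (γa, βa)`. -/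
noncomputable def Dmap (k : Type) [Field k] (V : Type) [Quiver V] [Fintype V]
    [∀ a b : V, Fintype (a ⟶ b)] (m p : ℕ) :
    (ParPair V m p →₀ k) →ₗ[k] (ParPair V (m + 1) (p + 1) →₀ k) :=
  Finsupp.lift _ k _ fun x =>
    (∑ c : V, ∑ e : x.tgt ⟶ c,
      Finsupp.single ⟨x.src, c, x.γ.cons e, x.β.cons e, by simp [x.hγ], by simp [x.hβ]⟩ (1 : k))
    + ((-1 : k) ^ (p + m + 1)) •
      (∑ c : V, ∑ e : c ⟶ x.src,
        Finsupp.single ⟨c, x.tgt, (e.toPath).comp x.γ, (e.toPath).comp x.β,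
          by
            have h := x.hγ
            simp only [Quiver.Path.length_comp, Quiver.Hom.toPath,
              Quiver.Path.length_cons, Quiver.Path.length_nil]
            omega,
          by
            have h := x.hβ
            simp only [Quiver.Path.length_comp, Quiver.Hom.toPath,
              Quiver.Path.length_cons, Quiver.Path.length_nil]
            omega⟩ (1 : k))

/-- The diagonal element `Σ_{γ ∈ Q_m} (γ, γ)` of `k(Q_m//Q_m)`. -/
noncomputable def diagElem (k : Type) [Field k] (V : Type) [Quiver V] [Fintype V]
    [∀ a b : V, Fintype (a ⟶ b)] (m : ℕ) : ParPair V m m →₀ k :=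
  ∑ a : V, ∑ b : V, ∑ γ : {q : Quiver.Path a b // q.length = m},
    Finsupp.single ⟨a, b, γ.1, γ.1, γ.2, γ.2⟩ (1 : k)

/-- The `c`-crown quiver structure on `ZMod c`: exactly one arrow `i ⟶ i + 1`. -/
instance crownQuiver (c : ℕ) : Quiver (ZMod c) := ⟨fun i j => PLift (i + 1 = j)⟩

/-- `Q` is isomorphic to the `c`-crown for some `c ≥ 1`: there are bijections between the
vertices (resp. the arrows) commuting with the source and target maps. -/
def IsCrown (V : Type) [Quiver V] : Prop :=
  ∃ c : ℕ, 1 ≤ c ∧ ∃ σ : V ≃ ZMod c, ∀ a b : V, Nonempty ((a ⟶ b) ≃ (σ a ⟶ σ b))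

/-- `Q` is connected: it is nonempty and the underlying undirected graph is connected. -/
def QuiverConnected (V : Type) [Quiver V] : Prop :=
  Nonempty V ∧ Subsingleton (Quiver.WeaklyConnectedComponent V)

/-- `Q` has no sources and no sinks: every vertex has an incoming and an outgoing arrow. -/
def NoSourcesOrSinks (V : Type) [Quiver V] : Prop :=
  ∀ v : V, (∃ u : V, Nonempty (u ⟶ v)) ∧ (∃ w : V, Nonempty (v ⟶ w))

/-! ### Factorizations of paths and sums over fibres -/

/-- Two factorizations of a path whose second factors have the same length coincide. -/
theorem comp_eq_comp_heq {V : Type} [Quiver V] {a b c d : V} (x : Path a b) (y : Path b c)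
    (w : Path a d) (z : Path d c) (hl : y.length = z.length) (h : x.comp y = w.comp z) :
    b = d ∧ x ≍ w ∧ y ≍ z := by
  induction y with
  | nil =>
    cases z with
    | nil => exact ⟨rfl, heq_of_eq h, HEq.rfl⟩
    | cons z e => simp at hl
  | cons y e ih =>
    cases z with
    | nil => simp at hl
    | cons z e' =>
      simp only [Path.comp_cons] at h
      obtain rfl := Path.obj_eq_of_cons_eq_cons h
      have h3 := Path.hom_heq_of_cons_eq_cons h
      obtain ⟨rfl, hx, hy⟩ := ih z (by simpa using hl)
        (eq_of_heq (Path.heq_of_cons_eq_cons h))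
      cases hx; cases hy; cases h3
      exact ⟨rfl, HEq.rfl, HEq.rfl⟩

/-- Linear extension of `x ↦ Σ_b ι (x, b)` for an injective `ι`: its value at `ι (x, b)` is the
coefficient at `x`. -/
theorem lift_sum_apply {k A C : Type*} [Field k] {B : A → Type*} [∀ x, Fintype (B x)]
    (ι : (Σ x, B x) → C) (hι : Function.Injective ι) (f : A →₀ k) (z : Σ x, B x) :
    (Finsupp.lift (C →₀ k) k A fun x => ∑ b : B x, Finsupp.single (ι ⟨x, b⟩) (1 : k)) f (ι z)
      = f z.1 := by
  classical
  induction f using Finsupp.induction_linear with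
  | zero => simp
  | add f g hf hg => rw [map_add, Finsupp.add_apply, hf, hg]; simp
  | single x t =>
    simp only [Finsupp.lift_apply, Finsupp.sum_single_index, zero_smul, Finsupp.smul_apply,
      Finsupp.finsetSum_apply, Finsupp.single_apply, hι.eq_iff, smul_eq_mul]
    obtain ⟨x', b'⟩ := z
    by_cases hx : x = x'
    · subst hx
      simp
    · have : ∀ b : B x, ¬ ((⟨x, b⟩ : Σ x, B x) = ⟨x', b'⟩) := fun b h => hx (congrArg Sigma.fst h)
      simp [this, hx]

theorem lift_sum_apply_of_notMem {k A C : Type*} [Field k] {B : A → Type*} [∀ x, Fintype (B x)]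
    (ι : (Σ x, B x) → C) (f : A →₀ k) (X : C) (hX : ∀ z, ι z ≠ X) :
    (Finsupp.lift (C →₀ k) k A fun x => ∑ b : B x, Finsupp.single (ι ⟨x, b⟩) (1 : k)) f X
      = 0 := by
  classical
  induction f using Finsupp.induction_linear with
  | zero => simp
  | add f g hf hg => rw [map_add, Finsupp.add_apply, hf, hg]; simp
  | single x t => simp [hX]

/-! ### Extending parallel pairs by an arrow -/

section Slide

variable {V : Type} [Quiver V] {m : ℕ}

/-- Append the same arrow to both members of a parallel pair. -/
def appendArrow (z : Σ x : ParPair V m m, Σ c : V, (x.tgt ⟶ c)) : ParPair V (m + 1) (m + 1) :=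
  ⟨z.1.src, z.2.1, z.1.γ.cons z.2.2, z.1.β.cons z.2.2, by simp [z.1.hγ], by simp [z.1.hβ]⟩

/-- Prepend the same arrow to both members of a parallel pair. -/
def prependArrow (z : Σ x : ParPair V m m, Σ c : V, (c ⟶ x.src)) :
    ParPair V (m + 1) (m + 1) :=
  ⟨z.2.1, z.1.tgt, (z.2.2.toPath).comp z.1.γ, (z.2.2.toPath).comp z.1.β,
    by simp [z.1.hγ, add_comm], by simp [z.1.hβ, add_comm]⟩

theorem appendArrow_injective : Function.Injective (appendArrow (V := V) (m := m)) := by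
  rintro ⟨⟨s, t, γ, β, h1, h2⟩, c, e⟩ ⟨⟨s', t', γ', β', h1', h2'⟩, c', e'⟩ h
  simp only [appendArrow, ParPair.mk.injEq] at h
  obtain ⟨rfl, rfl, h3, h4⟩ := h
  have h3 := eq_of_heq h3
  have h4 := eq_of_heq h4
  obtain rfl := Path.obj_eq_of_cons_eq_cons h3
  obtain rfl := eq_of_heq (Path.heq_of_cons_eq_cons h3)
  obtain rfl := eq_of_heq (Path.heq_of_cons_eq_cons h4)
  obtain rfl := eq_of_heq (Path.hom_heq_of_cons_eq_cons h3)
  rfl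

theorem prependArrow_injective : Function.Injective (prependArrow (V := V) (m := m)) := by
  rintro ⟨⟨s, t, γ, β, h1, h2⟩, c, e⟩ ⟨⟨s', t', γ', β', h1', h2'⟩, c', e'⟩ h
  simp only [prependArrow, ParPair.mk.injEq] at h
  obtain ⟨rfl, rfl, h3, h4⟩ := h
  obtain ⟨rfl, h5, h6⟩ := comp_eq_comp_heq _ _ _ _ (h1.trans h1'.symm) (eq_of_heq h3)
  obtain ⟨-, -, h8⟩ := comp_eq_comp_heq _ _ _ _ (h2.trans h2'.symm) (eq_of_heq h4)
  cases h6; cases h8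
  obtain rfl := eq_of_heq (Path.hom_heq_of_cons_eq_cons (eq_of_heq h5))
  rfl

/-- A diagonal pair of paths of positive length is obtained by appending an arrow. -/
theorem exists_appendArrow (X : ParPair V (m + 1) (m + 1)) (h : X.γ = X.β) :
    ∃ z, appendArrow z = X := by
  obtain ⟨s, t, γ, β, h1, h2⟩ := X
  dsimp only at h
  subst h
  cases γ with
  | nil => simp at h1
  | cons p e => exact ⟨⟨⟨s, _, p, p, by simpa using h1, by simpa using h1⟩, _, e⟩, rfl⟩

/-- A diagonal pair of paths of positive length is obtained by prepending an arrow. -/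
theorem exists_prependArrow (X : ParPair V (m + 1) (m + 1)) (h : X.γ = X.β) :
    ∃ z, prependArrow z = X := by
  obtain ⟨s, t, γ, β, h1, h2⟩ := X
  dsimp only at h
  subst h
  obtain ⟨d, f, q, hq, rfl⟩ := Path.eq_toPath_comp_of_length_eq_succ γ h1
  exact ⟨⟨⟨d, t, q, q, hq, hq⟩, s, f⟩, rfl⟩

theorem appendArrow_diag (z : Σ x : ParPair V m m, Σ c : V, (x.tgt ⟶ c)) :
    (appendArrow z).γ = (appendArrow z).β ↔ z.1.γ = z.1.β := by
  simp [appendArrow]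

theorem prependArrow_diag (z : Σ x : ParPair V m m, Σ c : V, (c ⟶ x.src)) :
    (prependArrow z).γ = (prependArrow z).β ↔ z.1.γ = z.1.β := by
  simp [prependArrow]

/-! ### Paths in quivers without sources or sinks, and connectedness -/

theorem exists_path_from (hns : NoSourcesOrSinks V) (v : V) (n : ℕ) :
    ∃ (w : V) (p : Path v w), p.length = n := by
  induction n with
  | zero => exact ⟨v, Path.nil, rfl⟩
  | succ n ih =>
    obtain ⟨w, p, hp⟩ := ih
    obtain ⟨-, u, ⟨e⟩⟩ := hns w
    exact ⟨u, p.cons e, by simp [hp]⟩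

theorem exists_path_to (hns : NoSourcesOrSinks V) (v : V) (n : ℕ) :
    ∃ (w : V) (p : Path w v), p.length = n := by
  induction n with
  | zero => exact ⟨v, Path.nil, rfl⟩
  | succ n ih =>
    obtain ⟨w, p, hp⟩ := ih
    obtain ⟨⟨u, ⟨e⟩⟩, -⟩ := hns w
    exact ⟨u, e.toPath.comp p, by simp [hp, add_comm]⟩

/-- A function on the vertices that is constant along arrows of a connected quiver is constant. -/
theorem eq_of_connected {K : Type} (hconn : QuiverConnected V) (g : V → K)
    (hg : ∀ v w : V, (v ⟶ w) → g v = g w) (v w : V) : g v = g w := by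
  have := hconn.2
  obtain ⟨p⟩ := (WeaklyConnectedComponent.eq v w).1 (Subsingleton.elim _ _)
  have key : ∀ (u : Symmetrify V), @Path (Symmetrify V) _ v u → g v = g u := by
    intro u q
    induction q with
    | nil => rfl
    | cons q e ih =>
      rcases e with e | e
      · exact ih.trans (hg _ _ e)
      · exact ih.trans (hg _ _ e).symm
  exact key w p

/-! ### The map `D_{m,m}` as a difference of two maps -/

variable {k : Type} [Field k] [Fintype V] [∀ a b : V, Fintype (a ⟶ b)]

variable (V m k) in
/-- The linear extension of `(γ, β) ↦ Σ_a (aγ, aβ)`. -/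
noncomputable def appendMap : (ParPair V m m →₀ k) →ₗ[k] (ParPair V (m + 1) (m + 1) →₀ k) :=
  Finsupp.lift _ k _ fun x => ∑ b : Σ c : V, (x.tgt ⟶ c), Finsupp.single (appendArrow ⟨x, b⟩) 1

variable (V m k) in
/-- The linear extension of `(γ, β) ↦ Σ_a (γa, βa)`. -/
noncomputable def prependMap : (ParPair V m m →₀ k) →ₗ[k] (ParPair V (m + 1) (m + 1) →₀ k) :=
  Finsupp.lift _ k _ fun x => ∑ b : Σ c : V, (c ⟶ x.src), Finsupp.single (prependArrow ⟨x, b⟩) 1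

theorem Dmap_eq_sub : Dmap k V m m = appendMap V m k - prependMap V m k := by
  have hs : (-1 : k) ^ (m + m + 1) = -1 := Odd.neg_one_pow ⟨m, by ring⟩
  ext1 x
  ext1
  simp only [Dmap, appendMap, prependMap, LinearMap.comp_apply, LinearMap.sub_apply,
    Finsupp.lsingle_apply, Finsupp.lift_apply, Finsupp.sum_single_index, zero_smul, one_smul, hs,
    Fintype.sum_sigma, neg_smul, ← sub_eq_add_neg, appendArrow, prependArrow]

theorem appendMap_apply (f : ParPair V m m →₀ k)
    (z : Σ x : ParPair V m m, Σ c : V, (x.tgt ⟶ c)) :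
    appendMap V m k f (appendArrow z) = f z.1 :=
  lift_sum_apply appendArrow appendArrow_injective f z

theorem prependMap_apply (f : ParPair V m m →₀ k)
    (z : Σ x : ParPair V m m, Σ c : V, (c ⟶ x.src)) :
    prependMap V m k f (prependArrow z) = f z.1 :=
  lift_sum_apply prependArrow prependArrow_injective f z

theorem appendMap_apply_of_notMem (f : ParPair V m m →₀ k) (X : ParPair V (m + 1) (m + 1))
    (hX : ∀ z, appendArrow z ≠ X) : appendMap V m k f X = 0 :=
  lift_sum_apply_of_notMem appendArrow f X hX

theorem prependMap_apply_of_notMem (f : ParPair V m m →₀ k) (X : ParPair V (m + 1) (m + 1))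
    (hX : ∀ z, prependArrow z ≠ X) : prependMap V m k f X = 0 :=
  lift_sum_apply_of_notMem prependArrow f X hX

open Classical in
theorem diagElem_apply (x : ParPair V m m) :
    diagElem k V m x = if x.γ = x.β then 1 else 0 := by
  obtain ⟨s, t, γ, β, h1, h2⟩ := x
  simp only [diagElem, Finsupp.finsetSum_apply, Finsupp.single_apply, ParPair.mk.injEq]
  rw [Finset.sum_eq_single s, Finset.sum_eq_single t]
  · by_cases h : γ = β
    · subst h
      rw [Finset.sum_eq_single ⟨γ, h1⟩]
      · simp
      · rintro ⟨q, hq⟩ - hne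
        simp only [heq_eq_eq, true_and, and_self, ite_eq_right_iff, one_ne_zero, imp_false]
        rintro rfl
        exact hne rfl
      · simp
    · rw [if_neg h]
      refine Finset.sum_eq_zero fun q _ => if_neg ?_
      rintro ⟨-, -, h3, h4⟩
      exact h ((eq_of_heq h3).symm.trans (eq_of_heq h4))
  · intro b _ hb
    simp [hb]
  · simp
  · intro b _ hb
    simp [hb]
  · simp

theorem Dmap_diagElem : Dmap k V m m (diagElem k V m) = 0 := by
  classical
  rw [Dmap_eq_sub, LinearMap.sub_apply, sub_eq_zero]
  -- Both sides are the indicator function of the diagonal of `Q_{m+1} // Q_{m+1}`.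
  trans (diagElem k V (m + 1))
  · ext X
    by_cases hX : ∃ z, appendArrow z = X
    · obtain ⟨z, rfl⟩ := hX
      rw [appendMap_apply, diagElem_apply, diagElem_apply]
      simp only [appendArrow_diag]
    · rw [appendMap_apply_of_notMem _ _ (not_exists.1 hX), diagElem_apply,
        if_neg (fun h => hX (exists_appendArrow X h))]
  · ext X
    by_cases hX : ∃ z, prependArrow z = X
    · obtain ⟨z, rfl⟩ := hX
      rw [prependMap_apply, diagElem_apply, diagElem_apply]
      simp only [prependArrow_diag]
    · rw [prependMap_apply_of_notMem _ _ (not_exists.1 hX), diagElem_apply,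
        if_neg (fun h => hX (exists_prependArrow X h))]

/-! ### Coefficients of kernel elements -/

/-- One slide along an arrow: the coefficient of a kernel element at `(γ, β)` vanishes (only
possible off the diagonal), or `γ` and `β` have the same first arrow `g` and the coefficient does
not change when `e` is appended and `g` is deleted. -/
theorem slide_step {f : ParPair V m m →₀ k} (hf : Dmap k V m m f = 0) {a b c : V}
    (γ β : Path a b) (hγ : γ.length = m) (hβ : β.length = m) (e : b ⟶ c) :
    (γ ≠ β ∧ f ⟨a, b, γ, β, hγ, hβ⟩ = 0) ∨
    ∃ (d : V) (g : a ⟶ d) (γ' β' : Path d c) (hγ' : γ'.length = m) (hβ' : β'.length = m),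
      γ.cons e = g.toPath.comp γ' ∧ β.cons e = g.toPath.comp β' ∧
      f ⟨a, b, γ, β, hγ, hβ⟩ = f ⟨d, c, γ', β', hγ', hβ'⟩ := by
  rw [Dmap_eq_sub, LinearMap.sub_apply, sub_eq_zero] at hf
  let z : Σ x : ParPair V m m, Σ c : V, (x.tgt ⟶ c) := ⟨⟨a, b, γ, β, hγ, hβ⟩, c, e⟩
  have hz := appendMap_apply f z
  rw [hf] at hz
  by_cases hX : ∃ z', prependArrow z' = appendArrow z
  · right
    obtain ⟨z', h⟩ := hX
    rw [← h, prependMap_apply] at hz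
    obtain ⟨⟨d, t, γ', β', h1, h2⟩, s, g⟩ := z'
    simp only [prependArrow, appendArrow, z, ParPair.mk.injEq] at h
    obtain ⟨rfl, rfl, h3, h4⟩ := h
    exact ⟨d, g, γ', β', h1, h2, (eq_of_heq h3).symm, (eq_of_heq h4).symm, hz.symm⟩
  · left
    rw [prependMap_apply_of_notMem _ _ (not_exists.1 hX)] at hz
    refine ⟨fun h => hX (exists_prependArrow _ ?_), hz.symm⟩
    rw [appendArrow_diag]
    exact h

/-- Sliding along a path `y`: if the coefficient of a kernel element at `(γ, β)` does not vanish,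
the paths `γ` followed by `y` and `β` followed by `y` share an initial segment `w` of length
`y.length`, whose removal leaves a pair with the same coefficient. -/
theorem exists_slide {f : ParPair V m m →₀ k} (hf : Dmap k V m m f = 0) {a b c : V}
    (γ β : Path a b) (hγ : γ.length = m) (hβ : β.length = m) (y : Path b c) :
    (γ ≠ β ∧ f ⟨a, b, γ, β, hγ, hβ⟩ = 0) ∨
    ∃ (d : V) (w : Path a d) (γ' β' : Path d c) (hγ' : γ'.length = m) (hβ' : β'.length = m),
      γ.comp y = w.comp γ' ∧ β.comp y = w.comp β' ∧
      f ⟨a, b, γ, β, hγ, hβ⟩ = f ⟨d, c, γ', β', hγ', hβ'⟩ := by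
  induction y with
  | nil => exact Or.inr ⟨a, Path.nil, γ, β, hγ, hβ, by simp, by simp, rfl⟩
  | cons y e ih =>
    rcases ih with h | ⟨d, w, γ', β', hγ', hβ', h1, h2, h3⟩
    · exact Or.inl h
    · rcases slide_step hf γ' β' hγ' hβ' e with ⟨hne, h0⟩ | ⟨d', g, p, q, hp, hq, h4, h5, h6⟩
      · refine Or.inl ⟨?_, h3.trans h0⟩
        rintro rfl
        exact hne (Path.comp_injective_right w (h1.symm.trans h2))
      · refine Or.inr ⟨d', w.cons g, p, q, hp, hq, ?_, ?_, h3.trans h6⟩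
        · rw [Path.comp_cons, h1, ← Path.comp_cons, h4, ← Path.comp_assoc]
          rfl
        · rw [Path.comp_cons, h2, ← Path.comp_cons, h5, ← Path.comp_assoc]
          rfl

/-- Sliding along a path `y` of length `m` replaces both members of a pair completely. -/
theorem coeff_slide {f : ParPair V m m →₀ k} (hf : Dmap k V m m f = 0) {a b c : V}
    (γ β : Path a b) (hγ : γ.length = m) (hβ : β.length = m) (y : Path b c)
    (hy : y.length = m) :
    (γ ≠ β ∧ f ⟨a, b, γ, β, hγ, hβ⟩ = 0) ∨
    (γ = β ∧ f ⟨a, b, γ, β, hγ, hβ⟩ = f ⟨b, c, y, y, hy, hy⟩) := by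
  rcases exists_slide hf γ β hγ hβ y with h | ⟨d, w, γ', β', hγ', hβ', h1, h2, h3⟩
  · exact Or.inl h
  · right
    obtain ⟨rfl, h4, h5⟩ := comp_eq_comp_heq _ _ _ _ (hy.trans hγ'.symm) h1
    obtain ⟨-, h6, h7⟩ := comp_eq_comp_heq _ _ _ _ (hy.trans hβ'.symm) h2
    cases h4; cases h5; cases h6; cases h7
    exact ⟨rfl, h3⟩

/-- The diagonal coefficients of a kernel element are all equal. -/
theorem coeff_diag_const (hconn : QuiverConnected V) (hns : NoSourcesOrSinks V)
    {f : ParPair V m m →₀ k} (hf : Dmap k V m m f = 0) :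
    ∃ t : k, ∀ (a b : V) (γ : Path a b) (hγ : γ.length = m), f ⟨a, b, γ, γ, hγ, hγ⟩ = t := by
  choose T p hp using fun v => exists_path_from hns v m
  let g : V → k := fun v => f ⟨v, T v, p v, p v, hp v, hp v⟩
  have hto : ∀ (a b : V) (γ : Path a b) (hγ : γ.length = m), f ⟨a, b, γ, γ, hγ, hγ⟩ = g b := by
    intro a b γ hγ
    rcases coeff_slide hf γ γ hγ hγ (p b) (hp b) with h | h
    · exact absurd rfl h.1
    · exact h.2
  have hfrom : ∀ (a b : V) (γ : Path a b) (hγ : γ.length = m),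
      f ⟨a, b, γ, γ, hγ, hγ⟩ = g a := by
    intro a b γ hγ
    obtain ⟨w, q, hq⟩ := exists_path_to hns a m
    rcases coeff_slide hf q q hq hq γ hγ with h | h
    · exact absurd rfl h.1
    · rw [← h.2, hto]
  have harrow : ∀ v w : V, (v ⟶ w) → g v = g w := by
    intro v w e
    obtain ⟨u, q, hq⟩ := exists_path_to hns v m
    rcases slide_step hf q q hq hq e with h | ⟨d, g', γ', β', hγ', hβ', h1, h2, h3⟩
    · exact absurd rfl h.1
    · obtain rfl := Path.comp_injective_right _ (h1.symm.trans h2)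
      rw [hto, hto] at h3
      exact h3
  obtain ⟨v₀⟩ := hconn.1
  exact ⟨g v₀, fun a b γ hγ => (hfrom a b γ hγ).trans (eq_of_connected hconn g harrow _ _)⟩

end Slide

/-- for a field `k` and a finite connected quiver `Q` without sources or sinks
which is not a crown, for every `m ≥ 1` the kernel of `D_{m,m}` is the one-dimensional
subspace spanned by `Σ_{γ ∈ Q_m} (γ, γ)`. -/
theorem ker_D_diag (k : Type) [Field k] (V : Type) [Quiver V] [Fintype V]
    [∀ a b : V, Fintype (a ⟶ b)]
    (hconn : QuiverConnected V) (hns : NoSourcesOrSinks V) (hcrown : ¬ IsCrown V)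
    (m : ℕ) (hm : 1 ≤ m) :
    LinearMap.ker (Dmap k V m m) = Submodule.span k {diagElem k V m}
      ∧ diagElem k V m ≠ 0 := by
  classical
  refine ⟨le_antisymm (fun f hf => ?_) ?_, fun h0 => ?_⟩
  · rw [LinearMap.mem_ker] at hf
    obtain ⟨t, ht⟩ := coeff_diag_const hconn hns hf
    refine Submodule.mem_span_singleton.2 ⟨t, ?_⟩
    ext ⟨a, b, γ, β, hγ, hβ⟩
    rw [Finsupp.smul_apply, diagElem_apply]
    by_cases h : γ = β
    · subst h
      simp [ht]
    · obtain ⟨c, y, hy⟩ := exists_path_from hns b m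
      rcases coeff_slide hf γ β hγ hβ y hy with h' | h'
      · simp [h, h'.2]
      · exact absurd h'.1 h
  · rw [Submodule.span_singleton_le_iff_mem, LinearMap.mem_ker]
    exact Dmap_diagElem
  · obtain ⟨v⟩ := hconn.1
    obtain ⟨w, p, hp⟩ := exists_path_from hns v m
    have h1 := diagElem_apply (k := k) (⟨v, w, p, p, hp, hp⟩ : ParPair V m m)
    simp [h0] at h1
end

section
/- Let k be a field. For all m, n ≥ 1, A ∈ M_m(k) and B ∈ M_n(k), the bracket {·,·} is compatible with the stabilization maps θ: {θ_m(A), B} = θ_{m+n−1}({A, B}) in M_{m+n}(k), and likewise {A, θ_n(B)} = θ_{m+n−1}({A, B}). -/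
/-!
Since `ι_i(θ A) = ι_i(A)`, replacing `A` by `θ A` (or `B` by `θ B`) changes none of the summands
of the bracket computed in `M_{m+n}(k)`; it only adds one more, namely `[ι_0(A), ι_m(B)]`
(respectively `[ι_n(A), ι_0(B)]`), which vanishes because the two blocks are disjoint
(`iota_mul_disjoint`). On the other side, `ι_0` is additive and multiplicative (`iota_zero_mul`)
and sends `ι_i^{m+n-1}` to `ι_i^{m+n}` for every block that fits (`iota_zero_iota`), so
`θ({A, B})` is the bracket of `A` and `B` computed in `M_{m+n}(k)` (`iota_zero_matBracket`).
-/

/-- `ι_i^N(A)`: the `N × N` matrix with the `m × m` matrix `A` placed as a diagonal block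
in rows and columns `i+1, …, i+m` and all other entries zero. -/
def iota (k : Type) [Field k] {m : ℕ} (i N : ℕ) (A : Matrix (Fin m) (Fin m) k) :
    Matrix (Fin N) (Fin N) k :=
  Matrix.of fun r s =>
    if h : i ≤ (r : ℕ) ∧ (r : ℕ) < i + m ∧ i ≤ (s : ℕ) ∧ (s : ℕ) < i + m then
      A ⟨(r : ℕ) - i, by omega⟩ ⟨(s : ℕ) - i, by omega⟩
    else 0

/-- The bracket `{A, B} := Σ_{i=0}^{n−1} [ι_i(A), ι_0(B)] + Σ_{i=1}^{m−1} [ι_0(A), ι_i(B)]`,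
computed inside `M_N(k)` (with the intended size `N = m + n − 1`), where `[X, Y] = XY − YX`. -/
def matBracket (k : Type) [Field k] {m n : ℕ} (N : ℕ)
    (A : Matrix (Fin m) (Fin m) k) (B : Matrix (Fin n) (Fin n) k) :
    Matrix (Fin N) (Fin N) k :=
  (∑ i ∈ Finset.range n, (iota k i N A * iota k 0 N B - iota k 0 N B * iota k i N A))
    + ∑ i ∈ Finset.Ico 1 m, (iota k 0 N A * iota k i N B - iota k i N B * iota k 0 N A)

lemma iota_iota_zero (k : Type) [Field k] {m M : ℕ} (h : m ≤ M) (i N : ℕ)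
    (A : Matrix (Fin m) (Fin m) k) : iota k i N (iota k 0 M A) = iota k i N A := by
  ext r s
  simp only [iota, Matrix.of_apply]
  split_ifs <;> first | rfl | omega

lemma iota_zero_iota (k : Type) [Field k] {m i M : ℕ} (h : i + m ≤ M) (N : ℕ)
    (A : Matrix (Fin m) (Fin m) k) : iota k 0 N (iota k i M A) = iota k i N A := by
  ext r s
  simp only [iota, Matrix.of_apply]
  split_ifs <;> first | rfl | omega

lemma iota_add (k : Type) [Field k] {m : ℕ} (i N : ℕ) (X Y : Matrix (Fin m) (Fin m) k) :
    iota k i N (X + Y) = iota k i N X + iota k i N Y := by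
  ext r s
  simp only [iota, Matrix.of_apply, Matrix.add_apply]
  split_ifs <;> simp

lemma iota_sub (k : Type) [Field k] {m : ℕ} (i N : ℕ) (X Y : Matrix (Fin m) (Fin m) k) :
    iota k i N (X - Y) = iota k i N X - iota k i N Y := by
  ext r s
  simp only [iota, Matrix.of_apply, Matrix.sub_apply]
  split_ifs <;> simp

lemma iota_sum (k : Type) [Field k] {m : ℕ} (i N : ℕ) (S : Finset ℕ)
    (X : ℕ → Matrix (Fin m) (Fin m) k) :
    iota k i N (∑ j ∈ S, X j) = ∑ j ∈ S, iota k i N (X j) :=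
  map_sum (AddMonoidHom.mk' (iota k i N) (iota_add k i N)) X S

lemma iota_zero_mul (k : Type) [Field k] {M N : ℕ} (h : M ≤ N)
    (X Y : Matrix (Fin M) (Fin M) k) :
    iota k 0 N (X * Y) = iota k 0 N X * iota k 0 N Y := by
  obtain ⟨d, rfl⟩ := Nat.exists_eq_add_of_le h
  ext r s
  -- Only the first `M` terms of the product's sum over `Fin (M + d)` can be nonzero.
  rw [Matrix.mul_apply, Fin.sum_univ_add]
  by_cases hr : (r : ℕ) < M <;> by_cases hs : (s : ℕ) < M <;>
    simp [iota, hr, hs, Matrix.mul_apply]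

/-- Blocks occupying disjoint ranges of indices have product zero. -/
lemma iota_mul_disjoint (k : Type) [Field k] {m n : ℕ} (i j N : ℕ)
    (h : i + m ≤ j ∨ j + n ≤ i)
    (A : Matrix (Fin m) (Fin m) k) (B : Matrix (Fin n) (Fin n) k) :
    iota k i N A * iota k j N B = 0 := by
  ext r s
  rw [Matrix.mul_apply]
  refine Finset.sum_eq_zero fun t _ => ?_
  simp only [iota, Matrix.of_apply]
  split_ifs <;> first | omega | simp

/-- Stabilizing the bracket amounts to computing it in a larger matrix algebra. -/
lemma iota_zero_matBracket (k : Type) [Field k] {m n M N : ℕ} (hM : m + n ≤ M + 1)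
    (hm : 1 ≤ m) (hn : 1 ≤ n) (hN : M ≤ N)
    (A : Matrix (Fin m) (Fin m) k) (B : Matrix (Fin n) (Fin n) k) :
    iota k 0 N (matBracket k M A B) = matBracket k N A B := by
  unfold matBracket
  rw [iota_add, iota_sum, iota_sum]
  congr 1 <;> refine Finset.sum_congr rfl fun i hi => ?_
  · have hi' := Finset.mem_range.1 hi
    rw [iota_sub, iota_zero_mul k hN, iota_zero_mul k hN, iota_zero_iota k (by omega),
      iota_zero_iota k (by omega)]
  · have hi' := Finset.mem_Ico.1 hi
    rw [iota_sub, iota_zero_mul k hN, iota_zero_mul k hN, iota_zero_iota k (by omega),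
      iota_zero_iota k (by omega)]

/-- the bracket `{·,·}` is compatible with the stabilization maps
`θ_m(A) = ι_0^{m+1}(A)`: `{θ_m(A), B} = θ_{m+n−1}({A, B})` in `M_{m+n}(k)`, and likewise
`{A, θ_n(B)} = θ_{m+n−1}({A, B})`. -/
theorem matBracket_stabilization (k : Type) [Field k] (m n : ℕ) (hm : 1 ≤ m) (hn : 1 ≤ n)
    (A : Matrix (Fin m) (Fin m) k) (B : Matrix (Fin n) (Fin n) k) :
    matBracket k (m + n) (iota k 0 (m + 1) A) B
        = iota k 0 (m + n) (matBracket k (m + n - 1) A B)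
      ∧ matBracket k (m + n) A (iota k 0 (n + 1) B)
        = iota k 0 (m + n) (matBracket k (m + n - 1) A B) := by
  rw [iota_zero_matBracket k (by omega) hm hn (by omega)]
  constructor
  · simp only [matBracket, iota_iota_zero k (Nat.le_succ m)]
    rw [Finset.sum_Ico_succ_top hm, iota_mul_disjoint k 0 m _ (by omega),
      iota_mul_disjoint k m 0 _ (by omega), sub_zero, add_zero]
  · simp only [matBracket, iota_iota_zero k (Nat.le_succ n)]
    rw [Finset.sum_range_succ, iota_mul_disjoint k n 0 _ (by omega),
      iota_mul_disjoint k 0 n _ (by omega), sub_zero, add_zero]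
end

section
/- Let k be a field. For all m, n, p ≥ 1 and all A ∈ M_m(k), B ∈ M_n(k), C ∈ M_p(k): the bracket is skew-symmetric, {A, B} = −{B, A} in M_{m+n−1}(k), and satisfies the Jacobi identity {{A, B}, C} + {{B, C}, A} + {{C, A}, B} = 0 in M_{m+n+p−2}(k). Consequently {·,·} defines a Lie algebra structure on the graded space ⊕_{m ≥ 1} gl_m(k). -/
/-! ### Conjugation by one-sided inverses in a ring -/

section Conjugation

variable {R : Type*} [Ring R] {S T : R}

lemma sub_eq_conj_sub {x x' y : R} (h : x = y + S * x * T) (h' : x' = y + S * x' * T) :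
    x - x' = S * (x - x') * T := by
  rw [mul_sub, sub_mul]
  conv_lhs => rw [h, h']
  abel

lemma eq_sum_add_conj {x y : R} (h : x = y + S * x * T) (j : ℕ) :
    x = ∑ i ∈ Finset.range j, S ^ i * y * T ^ i + S ^ j * x * T ^ j := by
  induction j with
  | zero => simp
  | succ j ih =>
    rw [Finset.sum_range_succ, add_assoc, pow_succ S, pow_succ' T]
    have : S ^ j * x * T ^ j = S ^ j * (y + S * x * T) * T ^ j := by rw [← h]
    conv_lhs => rw [ih, this]
    noncomm_ring

/-- If `a` is killed by `S ^ m` on its right and by `T ^ m` on its left, then only the first `m`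
translates of `b` contribute to the commutator of `a` with their sum `y`. -/
lemma lie_eq_sum {a b y : R} {m : ℕ} (hy : y = b + S * y * T) (h1 : a * S ^ m = 0)
    (h2 : T ^ m * a = 0) : ⁅a, y⁆ = ∑ i ∈ Finset.range m, ⁅a, S ^ i * b * T ^ i⁆ := by
  have e1 : a * (S ^ m * y * T ^ m) = 0 := by
    rw [mul_assoc (S ^ m), ← mul_assoc, h1, zero_mul]
  have e2 : (S ^ m * y * T ^ m) * a = 0 := by
    rw [mul_assoc, h2, mul_zero]
  conv_lhs => rw [eq_sum_add_conj hy m]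
  simp only [Ring.lie_def]
  rw [mul_add, add_mul, e1, e2, add_zero, add_zero, Finset.mul_sum, Finset.sum_mul,
    Finset.sum_sub_distrib]

/-- The commutator of `x = ∑ S ^ i a T ^ i` and `y = ∑ S ^ i b T ^ i` solves the equation
`X = c + S X T`, where `c` is the formula defining the bracket of `a` and `b`. -/
lemma lie_eq_sum_add_conj (hTS : T * S = 1) {a b x y : R} {m n : ℕ} (hm : 1 ≤ m)
    (hx : x = a + S * x * T) (hy : y = b + S * y * T)
    (ha : a * S ^ m = 0) (hTa : T ^ m * a = 0) (hb : b * S ^ n = 0) (hTb : T ^ n * b = 0) :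
    ⁅x, y⁆ = ∑ i ∈ Finset.range n, ⁅S ^ i * a * T ^ i, b⁆
      + ∑ i ∈ Finset.Ico 1 m, ⁅a, S ^ i * b * T ^ i⁆ + S * ⁅x, y⁆ * T := by
  have e2 := lie_eq_sum hx hb hTb
  have e1 := lie_eq_sum hy ha hTa
  -- The index `i = 0` occurs in both expansions but only once in the bracket.
  rw [Finset.range_eq_Ico, Finset.sum_eq_sum_Ico_succ_bot (by omega)] at e1
  simp only [pow_zero, one_mul, mul_one, zero_add] at e1
  have e3 : ∑ i ∈ Finset.range n, ⁅S ^ i * a * T ^ i, b⁆ = ⁅x, b⁆ := by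
    have hskew : ∀ u v : R, -⁅u, v⁆ = ⁅v, u⁆ := fun u v => by
      rw [Ring.lie_def, Ring.lie_def, neg_sub]
    rw [← hskew b x, e2, ← Finset.sum_neg_distrib]
    exact Finset.sum_congr rfl fun i _ => (hskew _ _).symm
  rw [e3, ← sub_eq_of_eq_add' e1]
  -- Conjugation `X ↦ S X T` is multiplicative since `T S = 1`.
  have hmul : ∀ u v : R, S * (u * v) * T = (S * u * T) * (S * v * T) := by
    intro u v
    calc S * (u * v) * T = S * u * 1 * v * T := by noncomm_ring
      _ = _ := by rw [← hTS]; noncomm_ring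
  simp only [Ring.lie_def]
  rw [mul_sub, sub_mul, hmul, hmul, ← sub_eq_of_eq_add' hx, ← sub_eq_of_eq_add' hy]
  noncomm_ring

/-- The Jacobi identity in the cyclic form `[[x, y], z] + [[y, z], x] + [[z, x], y] = 0`. -/
lemma lie_lie_cyclic (x y z : R) : ⁅⁅x, y⁆, z⁆ + ⁅⁅y, z⁆, x⁆ + ⁅⁅z, x⁆, y⁆ = 0 := by
  simp only [Ring.lie_def]
  noncomm_ring

lemma lie_add_lie_swap (x y : R) : ⁅x, y⁆ + ⁅y, x⁆ = 0 := by
  simp only [Ring.lie_def]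
  noncomm_ring

end Conjugation

/-! ### Matrices as endomorphisms of finitely supported sequences -/

section ShiftModel

variable (k : Type) [Field k]

/-- The right shift `e_s ↦ e_{s+1}` on finitely supported sequences. -/
noncomputable def shiftR : Module.End k (ℕ →₀ k) :=
  Finsupp.lmapDomain k k Nat.succ

/-- The left shift `e_{s+1} ↦ e_s`, `e_0 ↦ 0` on finitely supported sequences. -/
noncomputable def shiftL : Module.End k (ℕ →₀ k) :=
  Finsupp.lcomapDomain Nat.succ Nat.succ_injective

/-- The endomorphism of `ℕ →₀ k` given by a matrix in the top left corner of an infinite matrix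
that is zero elsewhere. -/
noncomputable def corner {m : ℕ} (A : Matrix (Fin m) (Fin m) k) : Module.End k (ℕ →₀ k) :=
  (Finsupp.lmapDomain k k (Fin.val : Fin m → ℕ) ∘ₗ
    (Finsupp.linearEquivFunOnFinite k k (Fin m)).symm.toLinearMap) ∘ₗ
    Matrix.toLin' A ∘ₗ
    ((Finsupp.linearEquivFunOnFinite k k (Fin m)).toLinearMap ∘ₗ
      Finsupp.lcomapDomain (Fin.val : Fin m → ℕ) Fin.val_injective)

/-- The sum `∑_{i ≥ 0} S ^ i Y T ^ i`; on `e_s` the terms with `i > s` vanish. -/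
noncomputable def shiftSum (Y : Module.End k (ℕ →₀ k)) : Module.End k (ℕ →₀ k) :=
  Finsupp.linearCombination k fun s =>
    ∑ i ∈ Finset.range (s + 1), (shiftR k ^ i * Y * shiftL k ^ i) (Finsupp.single s 1)

/-- The endomorphism `Â = ∑_{i ≥ 0} S ^ i (E A) T ^ i` of `ℕ →₀ k`. -/
noncomputable def hat {m : ℕ} (A : Matrix (Fin m) (Fin m) k) : Module.End k (ℕ →₀ k) :=
  shiftSum k (corner k A)

lemma shiftL_apply (f : ℕ →₀ k) (r : ℕ) : shiftL k f r = f (r + 1) := rfl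

lemma shiftL_pow_apply (i : ℕ) (f : ℕ →₀ k) (r : ℕ) : (shiftL k ^ i) f r = f (r + i) := by
  induction i generalizing r with
  | zero => simp
  | succ i ih =>
    rw [pow_succ', Module.End.mul_apply, shiftL_apply, ih]
    congr 1
    omega

lemma shiftR_single (s : ℕ) (a : k) :
    shiftR k (Finsupp.single s a) = Finsupp.single (s + 1) a := by
  simp [shiftR]

lemma shiftL_mul_shiftR : shiftL k * shiftR k = 1 := by
  ext s r
  simp [shiftR_single, shiftL_apply, Finsupp.single_apply]

lemma shiftR_pow_apply (i : ℕ) (f : ℕ →₀ k) (r : ℕ) :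
    (shiftR k ^ i) f r = if i ≤ r then f (r - i) else 0 := by
  have h0 : ∀ g : ℕ →₀ k, ∀ r, shiftR k g (r + 1) = g r := fun g r =>
    Finsupp.mapDomain_apply Nat.succ_injective g r
  have h1 : ∀ g : ℕ →₀ k, shiftR k g 0 = 0 := fun g =>
    Finsupp.mapDomain_of_notMem_range g 0 (by simp)
  induction i generalizing r with
  | zero => simp
  | succ i ih =>
    rw [pow_succ', Module.End.mul_apply]
    cases r with
    | zero => rw [h1]; simp
    | succ r => rw [h0, ih]; simp

lemma shiftL_pow_single (i s : ℕ) :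
    (shiftL k ^ i) (Finsupp.single s (1 : k)) =
      if i ≤ s then Finsupp.single (s - i) 1 else 0 := by
  ext r
  rw [shiftL_pow_apply]
  split_ifs with h
  · simp only [Finsupp.single_apply]
    congr 1
    apply propext
    omega
  · rw [Finsupp.single_apply, if_neg (by omega)]
    rfl

lemma corner_single {m : ℕ} (A : Matrix (Fin m) (Fin m) k) (s r : ℕ) :
    corner k A (Finsupp.single s 1) r =
      if h : r < m ∧ s < m then A ⟨r, h.1⟩ ⟨s, h.2⟩ else 0 := by
  have hq : ∀ i : Fin m, (Finsupp.linearEquivFunOnFinite k k (Fin m))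
      (Finsupp.lcomapDomain (R := k) (Fin.val : Fin m → ℕ) Fin.val_injective
        (Finsupp.single s (1 : k))) i = if s = i then 1 else 0 := by
    intro i
    exact Finsupp.single_apply
  simp only [corner, LinearMap.comp_apply, LinearEquiv.coe_coe]
  by_cases hr : r < m
  · have : r = ((⟨r, hr⟩ : Fin m) : ℕ) := rfl
    conv_lhs => rw [this]
    rw [Finsupp.lmapDomain_apply, Finsupp.mapDomain_apply Fin.val_injective]
    change (Matrix.toLin' A _) ⟨r, hr⟩ = _
    rw [Matrix.toLin'_apply, Matrix.mulVec, dotProduct]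
    simp only [hq]
    by_cases hs : s < m
    · rw [dif_pos ⟨hr, hs⟩, Finset.sum_eq_single ⟨s, hs⟩]
      · simp
      · intro b _ hb
        rw [if_neg (fun h => hb (Fin.ext h.symm)), mul_zero]
      · simp
    · rw [dif_neg (fun h => hs h.2)]
      refine Finset.sum_eq_zero fun b _ => ?_
      rw [if_neg (by have := b.2; omega), mul_zero]
  · rw [dif_neg (fun h => hr h.1), Finsupp.lmapDomain_apply, Finsupp.mapDomain_of_notMem_range]
    rintro ⟨i, rfl⟩
    exact hr i.2

lemma corner_mul {m : ℕ} (A B : Matrix (Fin m) (Fin m) k) :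
    corner k (A * B) = corner k A * corner k B := by
  have hqj : ∀ v : Fin m →₀ k,
      Finsupp.lcomapDomain (R := k) (Fin.val : Fin m → ℕ) Fin.val_injective
        (Finsupp.lmapDomain k k (Fin.val : Fin m → ℕ) v) = v := by
    intro v
    ext i
    exact Finsupp.mapDomain_apply Fin.val_injective v i
  refine LinearMap.ext fun f => ?_
  simp only [corner, Module.End.mul_apply, LinearMap.comp_apply, LinearEquiv.coe_coe,
    Matrix.toLin'_mul, hqj, LinearEquiv.apply_symm_apply]

/-- `corner` as an additive map. -/
noncomputable def cornerHom (m : ℕ) :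
    Matrix (Fin m) (Fin m) k →+ Module.End k (ℕ →₀ k) where
  toFun := corner k
  map_zero' := by simp [corner]
  map_add' A B := by
    simp only [corner, map_add, LinearMap.comp_add, LinearMap.add_comp]

lemma corner_injective {m : ℕ} {A : Matrix (Fin m) (Fin m) k} (h : corner k A = 0) :
    A = 0 := by
  ext r s
  have := corner_single k A s r
  rw [h, dif_pos ⟨r.2, s.2⟩] at this
  exact this.symm

lemma corner_iota {m : ℕ} (A : Matrix (Fin m) (Fin m) k) (i N : ℕ) (h : i + m ≤ N) :
    corner k (iota k i N A) = shiftR k ^ i * corner k A * shiftL k ^ i := by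
  ext s r
  simp only [LinearMap.comp_apply, Finsupp.lsingle_apply, Module.End.mul_apply,
    shiftR_pow_apply, shiftL_pow_single]
  rw [corner_single]
  by_cases hs : i ≤ s
  · rw [if_pos hs, corner_single]
    simp only [iota, Matrix.of_apply]
    split_ifs <;> first | rfl | (exfalso; omega)
  · rw [if_neg hs]
    simp only [iota, Matrix.of_apply]
    split_ifs <;> first | rfl | (exfalso; omega) | simp

lemma corner_mul_shiftR_pow {m : ℕ} (A : Matrix (Fin m) (Fin m) k) :
    corner k A * shiftR k ^ m = 0 := by
  have : ∀ s, (shiftR k ^ m) (Finsupp.single s (1 : k)) = Finsupp.single (s + m) 1 := by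
    intro s
    ext r
    rw [shiftR_pow_apply, Finsupp.single_apply, Finsupp.single_apply]
    split_ifs <;> first | rfl | (exfalso; omega)
  ext s r
  simp [this, corner_single]

lemma shiftL_pow_mul_corner {m : ℕ} (A : Matrix (Fin m) (Fin m) k) :
    shiftL k ^ m * corner k A = 0 := by
  ext s r
  simp [shiftL_pow_apply, corner_single]

lemma shiftSum_eq (Y : Module.End k (ℕ →₀ k)) :
    shiftSum k Y = Y + shiftR k * shiftSum k Y * shiftL k := by
  refine Finsupp.lhom_ext' fun s => LinearMap.ext_ring ?_
  simp only [LinearMap.comp_apply, Finsupp.lsingle_apply, LinearMap.add_apply,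
    Module.End.mul_apply]
  have hT := shiftL_pow_single k 1 s
  rw [pow_one] at hT
  rw [hT]
  cases s with
  | zero => simp [shiftSum]
  | succ s =>
    have hT' : shiftL k (Finsupp.single (s + 1) (1 : k)) = Finsupp.single s 1 := by
      simpa using hT
    simp only [shiftSum, Finsupp.linearCombination_single, one_smul]
    rw [Finset.sum_range_succ', add_comm]
    simp only [le_add_iff_nonneg_left, zero_le, if_true, add_tsub_cancel_right,
      Finsupp.linearCombination_single, one_smul, map_sum]
    congr 1
    refine Finset.sum_congr rfl fun i _ => ?_
    rw [pow_succ', pow_succ]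
    simp only [Module.End.mul_apply, hT']

lemma hat_eq {m : ℕ} (A : Matrix (Fin m) (Fin m) k) :
    hat k A = corner k A + shiftR k * hat k A * shiftL k :=
  shiftSum_eq k _

/-- Uniqueness for `X = Y + S X T`, in homogeneous form: it holds because every vector is killed
by a power of `T`. -/
lemma eq_zero_of_eq_conj {D : Module.End k (ℕ →₀ k)} (h : D = shiftR k * D * shiftL k) :
    D = 0 := by
  have hp : ∀ i : ℕ, D = shiftR k ^ i * D * shiftL k ^ i := by
    intro i
    induction i with
    | zero => simp
    | succ i ih =>
      calc D = shiftR k ^ i * D * shiftL k ^ i := ih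
        _ = shiftR k ^ i * (shiftR k * D * shiftL k) * shiftL k ^ i := by rw [← h]
        _ = _ := by rw [pow_succ, pow_succ']; noncomm_ring
  refine Finsupp.lhom_ext' fun s => LinearMap.ext_ring ?_
  rw [LinearMap.comp_apply, Finsupp.lsingle_apply, hp (s + 1), Module.End.mul_apply,
    shiftL_pow_single, if_neg (by omega)]
  simp

lemma hat_injective {m : ℕ} {A : Matrix (Fin m) (Fin m) k} (h : hat k A = 0) : A = 0 := by
  have := hat_eq k A
  rw [h] at this
  exact corner_injective k (by simpa using this.symm)

lemma eq_hat_of_eq {m : ℕ} {A : Matrix (Fin m) (Fin m) k} {X : Module.End k (ℕ →₀ k)}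
    (h : X = corner k A + shiftR k * X * shiftL k) : X = hat k A := by
  exact sub_eq_zero.1 (eq_zero_of_eq_conj k (sub_eq_conj_sub h (hat_eq k A)))

lemma hat_add {m : ℕ} (A B : Matrix (Fin m) (Fin m) k) :
    hat k (A + B) = hat k A + hat k B := by
  refine (eq_hat_of_eq k ?_).symm
  rw [show corner k (A + B) = corner k A + corner k B from (cornerHom k m).map_add A B]
  conv_lhs => rw [hat_eq k A, hat_eq k B]
  noncomm_ring

/-- The bracket of matrices becomes the commutator of endomorphisms. -/
lemma hat_matBracket {m n N : ℕ} (hm : 1 ≤ m) (hn : 1 ≤ n) (hN : m + n ≤ N + 1)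
    (A : Matrix (Fin m) (Fin m) k) (B : Matrix (Fin n) (Fin n) k) :
    hat k (matBracket k N A B) = ⁅hat k A, hat k B⁆ := by
  have hA0 : corner k (iota k 0 N A) = corner k A := by
    simpa using corner_iota k A 0 N (by omega)
  have hB0 : corner k (iota k 0 N B) = corner k B := by
    simpa using corner_iota k B 0 N (by omega)
  have hc : corner k (matBracket k N A B) =
      ∑ i ∈ Finset.range n,
          ⁅shiftR k ^ i * corner k A * shiftL k ^ i, corner k B⁆
        + ∑ i ∈ Finset.Ico 1 m,
          ⁅corner k A, shiftR k ^ i * corner k B * shiftL k ^ i⁆ := by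
    have hlie : ∀ X Y : Matrix (Fin N) (Fin N) k,
        cornerHom k N (X * Y - Y * X) = ⁅corner k X, corner k Y⁆ := by
      intro X Y
      rw [Ring.lie_def, map_sub, ← corner_mul, ← corner_mul]
      rfl
    change cornerHom k N _ = _
    rw [matBracket, map_add, map_sum, map_sum]
    congr 1
    · refine Finset.sum_congr rfl fun i hi => ?_
      rw [hlie, hB0, corner_iota k A i N (by have := Finset.mem_range.1 hi; omega)]
    · refine Finset.sum_congr rfl fun i hi => ?_
      rw [hlie, hA0, corner_iota k B i N (by have := (Finset.mem_Ico.1 hi).2; omega)]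
  refine (eq_hat_of_eq k ?_).symm
  rw [hc]
  exact lie_eq_sum_add_conj (shiftL_mul_shiftR k) hm (hat_eq k A) (hat_eq k B)
    (corner_mul_shiftR_pow k A) (shiftL_pow_mul_corner k A)
    (corner_mul_shiftR_pow k B) (shiftL_pow_mul_corner k B)

end ShiftModel

/-- the bracket `{·,·}` is skew-symmetric, `{A, B} = −{B, A}` in
`M_{m+n−1}(k)`, and satisfies the Jacobi identity
`{{A,B},C} + {{B,C},A} + {{C,A},B} = 0` in `M_{m+n+p−2}(k)`; consequently it defines a
Lie algebra structure on the graded space `⊕_{m ≥ 1} gl_m(k)`. -/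
theorem matBracket_lie (k : Type) [Field k] (m n p : ℕ) (hm : 1 ≤ m) (hn : 1 ≤ n)
    (hp : 1 ≤ p) (A : Matrix (Fin m) (Fin m) k) (B : Matrix (Fin n) (Fin n) k)
    (C : Matrix (Fin p) (Fin p) k) :
    matBracket k (m + n - 1) A B = - matBracket k (m + n - 1) B A
      ∧ matBracket k (m + n + p - 2) (matBracket k (m + n - 1) A B) C
          + matBracket k (m + n + p - 2) (matBracket k (n + p - 1) B C) A
          + matBracket k (m + n + p - 2) (matBracket k (p + m - 1) C A) B = 0 := by
  constructor
  · rw [eq_neg_iff_add_eq_zero]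
    apply hat_injective k
    rw [hat_add, hat_matBracket k hm hn (by omega), hat_matBracket k hn hm (by omega)]
    exact lie_add_lie_swap _ _
  · apply hat_injective k
    have hAB : 1 ≤ m + n - 1 := by omega
    have hBC : 1 ≤ n + p - 1 := by omega
    have hCA : 1 ≤ p + m - 1 := by omega
    rw [hat_add, hat_add,
      hat_matBracket k hAB hp (by omega), hat_matBracket k hBC hm (by omega),
      hat_matBracket k hCA hn (by omega), hat_matBracket k hm hn (by omega),
      hat_matBracket k hn hp (by omega), hat_matBracket k hp hm (by omega)]
    exact lie_lie_cyclic _ _ _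
end

section
/- Let k be a commutative ring and let P be a k-linear non-symmetric PROP. Then the bracket [f, g] := f ⋆ g − (−1)^{(m−p)(n−q)} g ⋆ f makes the positive total space ⊕_{m,p ≥ 1} P(m, p), graded by deg f = m − p for f ∈ P(m, p), into a ℤ-graded Lie algebra: [f, g] ∈ P(m+n−1, p+q−1), the bracket is graded antisymmetric, [f, g] = −(−1)^{(m−p)(n−q)} [g, f], and the graded Jacobi identity (−1)^{(m−p)(l−r)} [[f, g], h] + (−1)^{(n−q)(m−p)} [[g, h], f] + (−1)^{(l−r)(n−q)} [[h, f], g] = 0 holds for all f ∈ P(m, p), g ∈ P(n, q), h ∈ P(l, r) with m, n, l, p, q, r ≥ 1. -/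
/-!
The Jacobi identity is reduced to that of a graded commutator in an associative algebra.

Let `Tot 𝓟` be the direct sum of all `P m n`, with both compositions extended bilinearly. For
`f ∈ P m p` of degree `d = m - p` let `S f N = Σ_a (-1)^{a d} id_a ⊙ f ⊙ id_{N-m-a}`, the signed
sum over all positions of `f` on `N` wires. Families `X N ∈ P N (N - d)` multiply associatively
by vertical composition, and the signed shift `(T X) N = (-1)^d id_1 ⊙ X (N - 1)` is
multiplicative. Splitting off the leftmost position gives `(1 - T) (S f) N = f ⊙ id_{N-m}`, hence
`f ⋆ g` is exactly the member of `(1 - T) (S f * S g)` at `N = m + n - 1` (`star_eq`), and `[f, g]`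
is that of `(1 - T) [S f, S g]` (`C_eq`).

For `N ≥ m + n` the members of `(1 - T) [S f, S g]` arise from `[f, g]` by adding identities on the
right, since the additional terms have `f` and `g` on disjoint wires and cancel (`C_step`).
Therefore `R = [S f, S g] - S [f, g]` satisfies `R N = (T R) N` for `N ≥ m + n - 1`, so that
`R (K + j) = ± id_j ⊙ R K` with `K = m + n - 2` (`R_pow`). At `N = m + n + l - 2 = K + l` this makes
`(1 - T) [R, S h]` a graded commutator of the leftmost `h` with an operation on the remaining
wires, which is zero (`comm_R`). Consequently `[[f, g], h]` is the member of
`(1 - T) [[S f, S g], S h]` at `N = m + n + l - 2` (`C_brk`), and the cyclic sum vanishes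
(`comm_jacobi`).
-/

/-- Transport an element of a doubly-indexed family along equalities of the indices. -/
def pcast {P : ℕ → ℕ → Type} {m n m' n' : ℕ} (h1 : m = m') (h2 : n = n')
    (x : P m n) : P m' n' := by
  subst h1; subst h2; exact x

/-- A `k`-linear non-symmetric PROP: a family of `k`-modules `P m n` together with
`k`-bilinear horizontal compositions `⊙` (associative, with unit `id_0`), `k`-bilinear
vertical compositions `∘` (associative, with identities `id_n`), such that
`id_m ⊙ id_n = id_{m+n}` and the interchange law holds. -/
structure LinearPROP (k : Type) [CommRing k] where
  P : ℕ → ℕ → Type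
  [grp : ∀ m n, AddCommGroup (P m n)]
  [mod : ∀ m n, Module k (P m n)]
  hcomp : ∀ {m₁ n₁ m₂ n₂ : ℕ}, P m₁ n₁ →ₗ[k] P m₂ n₂ →ₗ[k] P (m₁ + m₂) (n₁ + n₂)
  vcomp : ∀ {m n p : ℕ}, P n p →ₗ[k] P m n →ₗ[k] P m p
  ids : ∀ n : ℕ, P n n
  hcomp_assoc : ∀ {m₁ n₁ m₂ n₂ m₃ n₃ : ℕ} (f : P m₁ n₁) (g : P m₂ n₂) (h : P m₃ n₃),
    pcast (P := P) (add_assoc m₁ m₂ m₃) (add_assoc n₁ n₂ n₃) (hcomp (hcomp f g) h)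
      = hcomp f (hcomp g h)
  hcomp_unit_left : ∀ {m n : ℕ} (f : P m n),
    pcast (P := P) (zero_add m) (zero_add n) (hcomp (ids 0) f) = f
  hcomp_unit_right : ∀ {m n : ℕ} (f : P m n), hcomp f (ids 0) = f
  vcomp_assoc : ∀ {m n p q : ℕ} (f : P p q) (g : P n p) (h : P m n),
    vcomp (vcomp f g) h = vcomp f (vcomp g h)
  vcomp_id_left : ∀ {m n : ℕ} (f : P m n), vcomp (ids n) f = f
  vcomp_id_right : ∀ {m n : ℕ} (f : P m n), vcomp f (ids m) = f
  ids_hcomp : ∀ m n : ℕ, hcomp (ids m) (ids n) = ids (m + n)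
  interchange : ∀ {m₁ n₁ p₁ m₂ n₂ p₂ : ℕ}
    (f₁ : P m₁ n₁) (g₁ : P n₁ p₁) (f₂ : P m₂ n₂) (g₂ : P n₂ p₂),
    hcomp (vcomp g₁ f₁) (vcomp g₂ f₂) = vcomp (hcomp g₁ g₂) (hcomp f₁ f₂)

attribute [instance] LinearPROP.grp LinearPROP.mod

variable {k : Type} [CommRing k]

/-- The operation `f ⋆ g := Σ_{i=1}^{m} (−1)^{(i−1)(q−n)} f ⋆_i g
+ Σ_{i=1}^{q−1} (−1)^{i(p−m)} f ⋆_{−i} g`, where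
`f ⋆_i g = (f ⊙ id^{⊙(q−1)}) ∘ (id^{⊙(i−1)} ⊙ g ⊙ id^{⊙(m−i)})` for `1 ≤ i ≤ m` and
`f ⋆_{−i} g = (id^{⊙i} ⊙ f ⊙ id^{⊙(q−1−i)}) ∘ (g ⊙ id^{⊙(m−1)})` for `1 ≤ i ≤ q−1`. -/
noncomputable def LinearPROP.star (𝓟 : LinearPROP k) {m p n q : ℕ}
    (hm : 1 ≤ m) (hq : 1 ≤ q) (f : 𝓟.P m p) (g : 𝓟.P n q) :
    𝓟.P (m + n - 1) (p + q - 1) :=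
  pcast (P := 𝓟.P) rfl (by omega)
    ((∑ i : Fin m, ((((i : ℕ) : ℤ) * ((q : ℤ) - (n : ℤ))).negOnePow : ℤ) •
        𝓟.vcomp (𝓟.hcomp f (𝓟.ids (q - 1)))
          (pcast (P := 𝓟.P) (show (i : ℕ) + n + (m - 1 - (i : ℕ)) = m + n - 1 by
              have := i.isLt; omega)
            (show (i : ℕ) + q + (m - 1 - (i : ℕ)) = m + (q - 1) by
              have := i.isLt; omega)
            (𝓟.hcomp (𝓟.hcomp (𝓟.ids (i : ℕ)) g) (𝓟.ids (m - 1 - (i : ℕ))))))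
      + ∑ i : Fin (q - 1), (((((i : ℕ) : ℤ) + 1) * ((p : ℤ) - (m : ℤ))).negOnePow : ℤ) •
          pcast (P := 𝓟.P) (show n + (m - 1) = m + n - 1 by omega) rfl
            (𝓟.vcomp
              (pcast (P := 𝓟.P)
                (show ((i : ℕ) + 1) + m + (q - 1 - ((i : ℕ) + 1)) = q + (m - 1) by
                  have := i.isLt; omega)
                (show ((i : ℕ) + 1) + p + (q - 1 - ((i : ℕ) + 1)) = p + (q - 1) by
                  have := i.isLt; omega)
                (𝓟.hcomp (𝓟.hcomp (𝓟.ids ((i : ℕ) + 1)) f) (𝓟.ids (q - 1 - ((i : ℕ) + 1)))))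
              (𝓟.hcomp g (𝓟.ids (m - 1)))))

/-- The bracket `[f, g] := f ⋆ g − (−1)^{(m−p)(n−q)} g ⋆ f`. -/
noncomputable def LinearPROP.brk (𝓟 : LinearPROP k) {m p n q : ℕ}
    (hm : 1 ≤ m) (hp : 1 ≤ p) (hn : 1 ≤ n) (hq : 1 ≤ q)
    (f : 𝓟.P m p) (g : 𝓟.P n q) : 𝓟.P (m + n - 1) (p + q - 1) :=
  𝓟.star hm hq f g
    - (((((m : ℤ) - (p : ℤ)) * ((n : ℤ) - (q : ℤ))).negOnePow : ℤ) •
        pcast (P := 𝓟.P) (show n + m - 1 = m + n - 1 by omega)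
          (show q + p - 1 = p + q - 1 by omega) (𝓟.star hn hp g f))

open DirectSum

/-! ### The total space of a PROP and its two products -/

/-- The total space `⨁ P m n` of a PROP, over all `m, n ≥ 0`. It carries vertical composition as
a non-unital ring structure and horizontal composition as the bilinear map `Tot.hmul`; inside it
no transports between different index pairs are needed. -/
def Tot (𝓟 : LinearPROP k) : Type := ⨁ a : ℕ × ℕ, 𝓟.P a.1 a.2

namespace Tot

noncomputable section

variable {𝓟 : LinearPROP k}

instance : AddCommGroup (Tot 𝓟) := inferInstanceAs (AddCommGroup (⨁ a : ℕ × ℕ, 𝓟.P a.1 a.2))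
instance : Module k (Tot 𝓟) := inferInstanceAs (Module k (⨁ a : ℕ × ℕ, 𝓟.P a.1 a.2))

/-- The inclusion of the summand `P m n`. -/
def inc {m n : ℕ} : 𝓟.P m n →ₗ[k] Tot 𝓟 :=
  DirectSum.lof k (ℕ × ℕ) (fun a => 𝓟.P a.1 a.2) (m, n)

theorem inc_injective {m n : ℕ} : Function.Injective (inc : 𝓟.P m n → Tot 𝓟) :=
  DirectSum.of_injective (β := fun a : ℕ × ℕ => 𝓟.P a.1 a.2) (m, n)

@[simp] theorem inc_pcast {m n m' n' : ℕ} (h1 : m = m') (h2 : n = n') (x : 𝓟.P m n) :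
    inc (pcast (P := 𝓟.P) h1 h2 x) = inc x := by
  subst h1; subst h2; rfl

theorem ind {C : Tot 𝓟 → Prop} (x : Tot 𝓟) (h0 : C 0)
    (hi : ∀ (m n : ℕ) (y : 𝓟.P m n), C (inc y))
    (ha : ∀ x y, C x → C y → C (x + y)) : C x :=
  DirectSum.induction_on (β := fun a : ℕ × ℕ => 𝓟.P a.1 a.2) x h0 (fun a y => hi a.1 a.2 y) ha

/-- The bilinear extension to the total space of bilinear maps given on the summands. -/
def lift₂ (φ : ∀ a b : ℕ × ℕ, 𝓟.P a.1 a.2 →ₗ[k] 𝓟.P b.1 b.2 →ₗ[k] Tot 𝓟) :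
    Tot 𝓟 →ₗ[k] Tot 𝓟 →ₗ[k] Tot 𝓟 :=
  DirectSum.toModule k (ℕ × ℕ) _ fun a =>
    LinearMap.flip (DirectSum.toModule k (ℕ × ℕ) _ fun b => (φ a b).flip)

theorem lift₂_inc (φ : ∀ a b : ℕ × ℕ, 𝓟.P a.1 a.2 →ₗ[k] 𝓟.P b.1 b.2 →ₗ[k] Tot 𝓟)
    {m p n q : ℕ} (x : 𝓟.P m p) (y : 𝓟.P n q) :
    lift₂ φ (inc x) (inc y) = φ (m, p) (n, q) x y := by
  have h1 := DirectSum.toModule_lof k (φ := fun a => LinearMap.flip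
    (DirectSum.toModule k (ℕ × ℕ) (𝓟.P a.1 a.2 →ₗ[k] Tot 𝓟) fun b => (φ a b).flip)) (m, p) x
  have h2 := DirectSum.toModule_lof k (φ := fun b => (φ (m, p) b).flip) (n, q) y
  exact (LinearMap.congr_fun h1 (inc y)).trans (LinearMap.congr_fun h2 x)

/-- Vertical composition on the total space, set to be `0` on summands that are not composable. -/
def vmul : Tot 𝓟 →ₗ[k] Tot 𝓟 →ₗ[k] Tot 𝓟 :=
  lift₂ fun a b =>
    if h : a.1 = b.2 then
      LinearMap.compr₂
        ((h ▸ 𝓟.vcomp (m := b.1) (n := a.1) (p := a.2) :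
          𝓟.P a.1 a.2 →ₗ[k] 𝓟.P b.1 b.2 →ₗ[k] 𝓟.P b.1 a.2)) inc
    else 0

/-- Horizontal composition on the total space. -/
def hmul : Tot 𝓟 →ₗ[k] Tot 𝓟 →ₗ[k] Tot 𝓟 :=
  lift₂ fun _ _ => LinearMap.compr₂ 𝓟.hcomp inc

local notation:75 x:75 "⊙" y:76 => hmul x y

instance : Mul (Tot 𝓟) := ⟨fun x y => vmul x y⟩

theorem mul_def (x y : Tot 𝓟) : x * y = vmul x y := rfl

theorem inc_mul_inc {m n p : ℕ} (x : 𝓟.P n p) (y : 𝓟.P m n) :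
    inc x * inc y = inc (𝓟.vcomp x y) := by
  rw [mul_def, vmul, lift₂_inc, dif_pos rfl]; rfl

theorem inc_mul_inc_of_ne {m n n' p : ℕ} (h : n ≠ n') (x : 𝓟.P n p) (y : 𝓟.P m n') :
    inc x * inc y = 0 := by
  rw [mul_def, vmul, lift₂_inc, dif_neg h]; rfl

theorem inc_hmul_inc {m p n q : ℕ} (x : 𝓟.P m p) (y : 𝓟.P n q) :
    inc x ⊙ inc y = inc (𝓟.hcomp x y) := by
  rw [hmul, lift₂_inc]; rfl

instance : NonUnitalRing (Tot 𝓟) where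
  left_distrib x y z := map_add (vmul x) y z
  right_distrib x y z := by simp [mul_def]
  zero_mul x := by simp [mul_def]
  mul_zero x := by simp [mul_def]
  mul_assoc x y z := by
    have add_l : ∀ a b c : Tot 𝓟, (a + b) * c = a * c + b * c := fun a b c => by simp [mul_def]
    have add_r : ∀ a b c : Tot 𝓟, a * (b + c) = a * b + a * c := fun a b c => by simp [mul_def]
    have z_l : ∀ c : Tot 𝓟, 0 * c = 0 := fun c => by simp [mul_def]
    have z_r : ∀ c : Tot 𝓟, c * 0 = 0 := fun c => by simp [mul_def]
    induction x using ind with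
    | h0 => simp only [z_l]
    | ha x x' h h' => simp only [add_l, h, h']
    | hi m n x =>
    induction y using ind with
    | h0 => simp only [z_l, z_r]
    | ha x x' h h' => simp only [add_l, add_r, h, h']
    | hi m' n' y =>
    induction z using ind with
    | h0 => simp only [z_r]
    | ha x x' h h' => simp only [add_r, h, h']
    | hi m'' n'' z =>
    by_cases h1 : m = n'
    · subst h1
      by_cases h2 : m' = n''
      · subst h2
        simp only [inc_mul_inc, 𝓟.vcomp_assoc]
      · simp only [inc_mul_inc, inc_mul_inc_of_ne h2, z_r]
    · by_cases h2 : m' = n''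
      · subst h2
        simp only [inc_mul_inc, inc_mul_inc_of_ne h1, z_l]
      · simp only [inc_mul_inc_of_ne h1, inc_mul_inc_of_ne h2, z_l, z_r]

theorem hmul_assoc (x y z : Tot 𝓟) : (x ⊙ y) ⊙ z = x ⊙ (y ⊙ z) := by
  induction x using ind with
  | h0 => simp
  | ha x x' h h' => simp [h, h']
  | hi m n x =>
  induction y using ind with
  | h0 => simp
  | ha x x' h h' => simp [h, h']
  | hi m' n' y =>
  induction z using ind with
  | h0 => simp
  | ha x x' h h' => simp [h, h']
  | hi m'' n'' z =>
  simp only [inc_hmul_inc, ← 𝓟.hcomp_assoc, inc_pcast]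

/-- The identity `id_n`, indexed by integers and set to be `0` for `n < 0`. With this convention
terms of a sum that do not fit into the available width vanish by themselves. -/
def e (n : ℤ) : Tot 𝓟 := if 0 ≤ n then inc (𝓟.ids n.toNat) else 0

theorem e_neg {n : ℤ} (h : n < 0) : (e n : Tot 𝓟) = 0 := if_neg (by omega)

theorem e_nat (n : ℕ) : (e (n : ℤ) : Tot 𝓟) = inc (𝓟.ids n) := by simp [e]

theorem e_zero_hmul (x : Tot 𝓟) : e 0 ⊙ x = x := by
  have : (e 0 : Tot 𝓟) = inc (𝓟.ids 0) := e_nat 0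
  simp only [this]
  induction x using ind with
  | h0 => simp
  | ha x x' h h' => simp [h, h']
  | hi m n x =>
  rw [inc_hmul_inc]
  conv_rhs => rw [← 𝓟.hcomp_unit_left x, inc_pcast]

theorem hmul_e_zero (x : Tot 𝓟) : x ⊙ e 0 = x := by
  have : (e 0 : Tot 𝓟) = inc (𝓟.ids 0) := e_nat 0
  simp only [this]
  induction x using ind with
  | h0 => simp
  | ha x x' h h' => simp [h, h']
  | hi m n x =>
  rw [inc_hmul_inc]
  conv_rhs => rw [← 𝓟.hcomp_unit_right x]

theorem e_hmul_e {i j : ℤ} (hi : 0 ≤ i) (hj : 0 ≤ j) : (e i ⊙ e j : Tot 𝓟) = e (i + j) := by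
  lift i to ℕ using hi
  lift j to ℕ using hj
  rw [← Nat.cast_add]
  simp only [e_nat, inc_hmul_inc, 𝓟.ids_hcomp]

theorem inc_mul_e {m n : ℕ} (x : 𝓟.P m n) (i : ℕ) :
    inc x * e (i : ℤ) = if m = i then inc x else 0 := by
  rw [e_nat]
  split_ifs with h
  · subst h; rw [inc_mul_inc, 𝓟.vcomp_id_right]
  · rw [inc_mul_inc_of_ne h]

theorem e_mul_inc {m n : ℕ} (x : 𝓟.P m n) (i : ℕ) :
    e (i : ℤ) * inc x = if i = n then inc x else 0 := by
  rw [e_nat]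
  split_ifs with h
  · subst h; rw [inc_mul_inc, 𝓟.vcomp_id_left]
  · rw [inc_mul_inc_of_ne h]

/-- The interchange law needs only that the inner widths `i` and `j` match. -/
theorem interchange {i j : ℤ} {g₁ f₁ g₂ f₂ : Tot 𝓟} (h1 : g₁ * e i = g₁) (h2 : e i * f₁ = f₁)
    (h3 : g₂ * e j = g₂) (h4 : e j * f₂ = f₂) :
    (g₁ * f₁) ⊙ (g₂ * f₂) = (g₁ ⊙ g₂) * (f₁ ⊙ f₂) := by
  rcases lt_or_ge i 0 with hi | hi
  · rw [e_neg hi, mul_zero] at h1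
    simp [← h1]
  rcases lt_or_ge j 0 with hj | hj
  · rw [e_neg hj, mul_zero] at h3
    simp [← h3]
  lift i to ℕ using hi
  lift j to ℕ using hj
  rw [← h1, ← h2, ← h3, ← h4]
  clear h1 h2 h3 h4
  induction g₁ using ind with
  | h0 => simp
  | ha x x' h h' => simp only [add_mul, map_add, LinearMap.add_apply, h, h']
  | hi _ _ g₁ =>
  induction f₁ using ind with
  | h0 => simp
  | ha x x' h h' => simp only [mul_add, map_add, LinearMap.add_apply, h, h']
  | hi _ _ f₁ =>
  induction g₂ using ind with
  | h0 => simp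
  | ha x x' h h' => simp only [add_mul, map_add, h, h']
  | hi _ _ g₂ =>
  induction f₂ using ind with
  | h0 => simp
  | ha x x' h h' => simp only [mul_add, map_add, h, h']
  | hi _ _ f₂ =>
  simp only [inc_mul_e, e_mul_inc]
  split_ifs <;> try simp
  subst_vars
  simp only [inc_mul_inc, inc_hmul_inc, 𝓟.interchange]

theorem smul_hmul (c : ℤ) (x y : Tot 𝓟) : (c • x) ⊙ y = c • (x ⊙ y) := by
  rw [map_zsmul, LinearMap.smul_apply]
theorem hmul_smul (c : ℤ) (x y : Tot 𝓟) : x ⊙ (c • y) = c • (x ⊙ y) := map_zsmul _ _ _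
theorem add_hmul (x y z : Tot 𝓟) : (x + y) ⊙ z = x ⊙ z + y ⊙ z := by simp
theorem hmul_add (x y z : Tot 𝓟) : z ⊙ (x + y) = z ⊙ x + z ⊙ y := by simp
theorem sub_hmul (x y z : Tot 𝓟) : (x - y) ⊙ z = x ⊙ z - y ⊙ z := by simp
theorem hmul_sub (x y z : Tot 𝓟) : z ⊙ (x - y) = z ⊙ x - z ⊙ y := by simp
theorem zero_hmul (x : Tot 𝓟) : 0 ⊙ x = 0 := by simp
theorem hmul_zero (x : Tot 𝓟) : x ⊙ 0 = 0 := by simp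
theorem sum_hmul {ι : Type} (s : Finset ι) (u : ι → Tot 𝓟) (x : Tot 𝓟) :
    (∑ a ∈ s, u a) ⊙ x = ∑ a ∈ s, u a ⊙ x := by
  rw [map_sum, LinearMap.sum_apply]
theorem hmul_sum {ι : Type} (s : Finset ι) (u : ι → Tot 𝓟) (x : Tot 𝓟) :
    x ⊙ (∑ a ∈ s, u a) = ∑ a ∈ s, x ⊙ u a := map_sum _ _ _

theorem e_mul_e (n : ℤ) : (e n * e n : Tot 𝓟) = e n := by
  rcases lt_or_ge n 0 with h | h
  · simp [e_neg h]
  · lift n to ℕ using h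
    simp only [e_nat, inc_mul_inc, 𝓟.vcomp_id_left]

/-- `x` lies in `P i j`, expressed through the idempotents `e j` and `e i`.
If `i < 0` or `j < 0`, this forces `x = 0`. -/
def IsHom (i j : ℤ) (x : Tot 𝓟) : Prop := e j * x = x ∧ x * e i = x

theorem isHom_inc {m n : ℕ} (x : 𝓟.P m n) : IsHom (m : ℤ) (n : ℤ) (inc x) := by
  simp [IsHom, inc_mul_e, e_mul_inc]

theorem isHom_e (n : ℤ) : IsHom n n (e n : Tot 𝓟) := ⟨e_mul_e n, e_mul_e n⟩

namespace IsHom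

variable {i j l i' j' : ℤ} {x y : Tot 𝓟}

theorem zero : IsHom i j (0 : Tot 𝓟) := by simp [IsHom]
theorem add (hx : IsHom i j x) (hy : IsHom i j y) : IsHom i j (x + y) := by
  simp [IsHom, mul_add, add_mul, hx.1, hx.2, hy.1, hy.2]
theorem sub (hx : IsHom i j x) (hy : IsHom i j y) : IsHom i j (x - y) := by
  simp [IsHom, mul_sub, sub_mul, hx.1, hx.2, hy.1, hy.2]
theorem smul (c : ℤ) (hx : IsHom i j x) : IsHom i j (c • x) := by
  simp only [IsHom, mul_smul_comm, smul_mul_assoc, hx.1, hx.2, and_self]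
theorem sum {ι : Type} {s : Finset ι} {u : ι → Tot 𝓟} (h : ∀ a ∈ s, IsHom i j (u a)) :
    IsHom i j (∑ a ∈ s, u a) :=
  ⟨by rw [Finset.mul_sum]; exact Finset.sum_congr rfl fun a ha => (h a ha).1,
    by rw [Finset.sum_mul]; exact Finset.sum_congr rfl fun a ha => (h a ha).2⟩
theorem mul (hy : IsHom j l y) (hx : IsHom i j x) : IsHom i l (y * x) :=
  ⟨by rw [← mul_assoc, hy.1], by rw [mul_assoc, hx.2]⟩
theorem hmul (hx : IsHom i j x) (hy : IsHom i' j' y) : IsHom (i + i') (j + j') (x ⊙ y) := by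
  obtain ⟨hx1, hx2⟩ := hx
  obtain ⟨hy1, hy2⟩ := hy
  by_cases h : x = 0
  · subst h; simp [IsHom]
  by_cases h' : y = 0
  · subst h'; simp [IsHom]
  have hi : 0 ≤ i := by
    by_contra hc; apply h; rw [← hx2, e_neg (by omega), mul_zero]
  have hi' : 0 ≤ i' := by
    by_contra hc; apply h'; rw [← hy2, e_neg (by omega), mul_zero]
  have hj : 0 ≤ j := by
    by_contra hc; apply h; rw [← hx1, e_neg (by omega), zero_mul]
  have hj' : 0 ≤ j' := by
    by_contra hc; apply h'; rw [← hy1, e_neg (by omega), zero_mul]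
  constructor
  · rw [← e_hmul_e hj hj', ← interchange (e_mul_e j) hx1 (e_mul_e j') hy1, hx1, hy1]
  · rw [← e_hmul_e hi hi', ← interchange hx2 (e_mul_e i) hy2 (e_mul_e i'), hx2, hy2]

theorem congr (hx : IsHom i j x) (h : i = i') (h' : j = j') : IsHom i' j' x := h ▸ h' ▸ hx

theorem e_hmul_mul (hy : IsHom j l y) (hx : IsHom i j x) (n : ℤ) :
    e n ⊙ (y * x) = (e n ⊙ y) * (e n ⊙ x) := by
  rw [← interchange (e_mul_e n) (e_mul_e n) hy.2 hx.1, e_mul_e]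
theorem mul_hmul_e (hy : IsHom j l y) (hx : IsHom i j x) (n : ℤ) :
    (y * x) ⊙ e n = (y ⊙ e n) * (x ⊙ e n) := by
  rw [← interchange hy.2 hx.1 (e_mul_e n) (e_mul_e n), e_mul_e]

/-- Operations acting on disjoint wires may be carried out in either order. -/
theorem slide (hx : IsHom i j x) (hy : IsHom i' j' y) :
    (x ⊙ e j') * (e i ⊙ y) = (e j ⊙ y) * (x ⊙ e i') := by
  rw [← interchange hx.2 (e_mul_e i) (e_mul_e j') hy.1,
    ← interchange (e_mul_e j) hx.1 hy.2 (e_mul_e i'), hx.1, hx.2, hy.1, hy.2]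

end IsHom

/-! ### Signs -/

/-- The sign `(-1)^d` as an integer. -/
def sg (d : ℤ) : ℤ := (d.negOnePow : ℤ)

theorem sg_add (a b : ℤ) : sg (a + b) = sg a * sg b := by simp [sg, Int.negOnePow_add]
theorem sg_zero : sg 0 = 1 := by simp [sg]
theorem sg_neg (a : ℤ) : sg (-a) = sg a := by simp [sg]
theorem sg_mul_self (a : ℤ) : sg a * sg a = 1 := by simp [sg]
theorem sg_sub (a b : ℤ) : sg (a - b) = sg a * sg b := by rw [sub_eq_add_neg, sg_add, sg_neg]
theorem sg_cases (a : ℤ) : sg a = 1 ∨ sg a = -1 := by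
  rcases Int.units_eq_one_or a.negOnePow with h | h <;> simp [sg, h]

/-! ### Sums over all positions -/

variable (𝓟) in
/-- An element of `P m p` with `m, p ≥ 1`, viewed in the total space. -/
structure Elt where
  val : Tot 𝓟
  m : ℤ
  p : ℤ
  one_le_m : 1 ≤ m
  one_le_p : 1 ≤ p
  isHom : IsHom m p val

namespace Elt

/-- The degree `m - p`. -/
def d (f : Elt 𝓟) : ℤ := f.m - f.p

/-- `f` in the leftmost position on `N` wires, `f ⊙ id_{N-m}`; it is `0` for `N < m`. -/
def hat (f : Elt 𝓟) (N : ℤ) : Tot 𝓟 := f.val ⊙ e (N - f.m)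

/-- `f` in the rightmost position on `N` wires, with its sign; it is `0` for `N < m`. -/
def chk (f : Elt 𝓟) (N : ℤ) : Tot 𝓟 := sg ((N - f.m) * f.d) • (e (N - f.m) ⊙ f.val)

/-- The signed sum `Σ_a (-1)^{a d} id_a ⊙ f ⊙ id_{N-m-a}` over all positions of `f` on `N` wires. -/
def S (f : Elt 𝓟) (N : ℤ) : Tot 𝓟 :=
  ∑ a ∈ Finset.range (N - f.m + 1).toNat,
    sg (a * f.d) • (e (a : ℤ) ⊙ f.val ⊙ e (N - f.m - a))

variable (f g h : Elt 𝓟)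

theorem hat_isHom (N : ℤ) : IsHom N (N - f.d) (f.hat N) :=
  (f.isHom.hmul (isHom_e (N - f.m))).congr (by ring) (by rw [d]; ring)

theorem S_isHom (N : ℤ) : IsHom N (N - f.d) (f.S N) :=
  IsHom.sum fun a _ => (((isHom_e (a : ℤ)).hmul f.isHom).hmul (isHom_e _)).smul _ |>.congr
    (by ring) (by rw [d]; ring)

/-- Splitting off the leftmost position. -/
theorem S_eq_left (N : ℤ) : f.S N = f.hat N + sg f.d • (e 1 ⊙ f.S (N - 1)) := by
  rcases lt_or_ge N f.m with hN | hN
  · simp [S, hat, e_neg (show N - f.m < 0 by omega), show (N - f.m + 1).toNat = 0 by omega,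
      show (N - 1 - f.m + 1).toNat = 0 by omega]
  · obtain ⟨n, rfl⟩ : ∃ n : ℕ, N = f.m + n := ⟨(N - f.m).toNat, by omega⟩
    rw [S, S, show (f.m + n - f.m + 1).toNat = n + 1 by omega,
      show (f.m + n - 1 - f.m + 1).toNat = n by omega, Finset.sum_range_succ', add_comm,
      hmul_sum, Finset.smul_sum]
    congr 1
    · simp [hat, sg_zero, e_zero_hmul]
    · refine Finset.sum_congr rfl fun a _ => ?_
      rw [hmul_smul, ← hmul_assoc, ← hmul_assoc, e_hmul_e zero_le_one (by omega), smul_smul,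
        ← sg_add]
      congr 2
      · push_cast; ring
      · rw [add_comm (1 : ℤ), Nat.cast_succ]
      · congr 1; push_cast; ring

/-- Splitting off the rightmost position. -/
theorem S_eq_right (N : ℤ) : f.S N = f.S (N - 1) ⊙ e 1 + f.chk N := by
  rcases lt_or_ge N f.m with hN | hN
  · simp [S, chk, e_neg (show N - f.m < 0 by omega), show (N - f.m + 1).toNat = 0 by omega,
      show (N - 1 - f.m + 1).toNat = 0 by omega]
  · obtain ⟨n, rfl⟩ : ∃ n : ℕ, N = f.m + n := ⟨(N - f.m).toNat, by omega⟩
    rw [S, S, show (f.m + n - f.m + 1).toNat = n + 1 by omega,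
      show (f.m + n - 1 - f.m + 1).toNat = n by omega, Finset.sum_range_succ, sum_hmul]
    congr 1
    · refine Finset.sum_congr rfl fun a ha => ?_
      rw [Finset.mem_range] at ha
      rw [smul_hmul, hmul_assoc _ _ (e 1), e_hmul_e (by omega) zero_le_one]
      ring_nf
    · rw [chk, add_sub_cancel_left, sub_self, hmul_e_zero]

theorem hat_step {N : ℤ} (hN : f.m < N) : f.hat N = f.hat (N - 1) ⊙ e 1 := by
  rw [hat, hat, hmul_assoc, e_hmul_e (by omega) zero_le_one]
  ring_nf

/-- For `N ≥ f.m + g.m` the leftmost `f` and the rightmost `g` do not meet, so they commute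
in the graded sense. -/
theorem hat_mul_chk {N : ℤ} (hN : f.m + g.m ≤ N) :
    f.hat (N - g.d) * g.chk N = sg (f.d * g.d) • (g.chk (N - f.d) * f.hat N) := by
  have hp := g.one_le_p
  have hp' := f.one_le_p
  have hm := g.one_le_m
  have hm' := f.one_le_m
  have key := f.isHom.slide ((isHom_e (N - f.m - g.m)).hmul g.isHom)
  rw [hat, hat, chk, chk, smul_mul_assoc, mul_smul_comm, smul_smul, ← sg_add]
  rw [← hmul_assoc, ← hmul_assoc, e_hmul_e (by omega) (by omega),
    e_hmul_e (by omega) (by omega)] at key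
  rw [show N - g.d - f.m = N - f.m - g.m + g.p by rw [d]; ring,
    show N - g.m = f.m + (N - f.m - g.m) by ring,
    show N - f.d - g.m = f.p + (N - f.m - g.m) by rw [d]; ring,
    ← sub_add_cancel (N - f.m) g.m]
  simp only [add_sub_cancel_right]
  rw [key]
  congr 2
  simp only [d]; ring

/-- The operation `f ⋆ g` on `N` input wires; `f ⋆ g` itself is the value at
`N = f.m + g.m - 1` (see `Tot.inc_star`). -/
def star (N : ℤ) : Tot 𝓟 :=
  f.hat (N - g.d) * g.S N + (f.S (N - g.d) - f.hat (N - g.d)) * g.hat N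

/-- The graded commutator of `star`, on `N` input wires. -/
def C (N : ℤ) : Tot 𝓟 := star f g N - sg (f.d * g.d) • star g f N

end Elt

/-! ### Graded commutators of families -/

/-- The graded commutator of families `X`, `Y` of degrees `d₁`, `d₂`, where a family of degree `d`
has its `N`-th member in `P N (N - d)`. -/
def comm (d₁ : ℤ) (X : ℤ → Tot 𝓟) (d₂ : ℤ) (Y : ℤ → Tot 𝓟) (N : ℤ) : Tot 𝓟 :=
  X (N - d₂) * Y N - sg (d₁ * d₂) • (Y (N - d₁) * X N)

theorem comm_isHom {d₁ d₂ : ℤ} {X Y : ℤ → Tot 𝓟} (hX : ∀ N, IsHom N (N - d₁) (X N))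
    (hY : ∀ N, IsHom N (N - d₂) (Y N)) (N : ℤ) :
    IsHom N (N - (d₁ + d₂)) (comm d₁ X d₂ Y N) :=
  (((hX _).mul (hY N)).congr rfl (by ring)).sub
    ((((hY _).mul (hX N)).congr rfl (by ring)).smul _)

/-- The signed shift `(T X) N = (-1)^d id_1 ⊙ X (N - 1)` is multiplicative on families. -/
theorem shift_mul {d₁ d₂ : ℤ} {X Y : ℤ → Tot 𝓟} (hX : ∀ N, IsHom N (N - d₁) (X N))
    (hY : ∀ N, IsHom N (N - d₂) (Y N)) (N : ℤ) :
    sg (d₁ + d₂) • (e 1 ⊙ (X (N - 1 - d₂) * Y (N - 1))) =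
      (sg d₁ • (e 1 ⊙ X (N - d₂ - 1))) * (sg d₂ • (e 1 ⊙ Y (N - 1))) := by
  rw [(hX _).e_hmul_mul (hY _), smul_mul_assoc, mul_smul_comm, smul_smul, ← sg_add,
    sub_right_comm N 1 d₂]

namespace Elt

variable (f g h : Elt 𝓟)

/-- `f ⋆ g` is `(1 - T) (S f * S g)`, with `T` the signed shift of families. -/
theorem star_eq (N : ℤ) : star f g N = f.S (N - g.d) * g.S N -
    sg (f.d + g.d) • (e 1 ⊙ (f.S (N - 1 - g.d) * g.S (N - 1))) := by
  rw [shift_mul f.S_isHom g.S_isHom, ← sub_eq_of_eq_add' (f.S_eq_left _),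
    ← sub_eq_of_eq_add' (g.S_eq_left _), star]
  noncomm_ring

theorem C_eq (N : ℤ) : C f g N = comm f.d f.S g.d g.S N -
    sg (f.d + g.d) • (e 1 ⊙ comm f.d f.S g.d g.S (N - 1)) := by
  rw [C, star_eq, star_eq, comm, comm, hmul_sub, hmul_smul, smul_sub, smul_sub,
    smul_comm (sg (f.d * g.d)), add_comm g.d f.d]
  abel

theorem C_isHom (N : ℤ) : IsHom N (N - (f.d + g.d)) (C f g N) := by
  rw [C_eq]
  exact (comm_isHom f.S_isHom g.S_isHom N).sub
    ((((isHom_e 1).hmul (comm_isHom f.S_isHom g.S_isHom (N - 1))).smul _).congr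
      (by ring) (by ring))

theorem star_step {N : ℤ} (hN : f.m + g.m ≤ N) : star f g N = star f g (N - 1) ⊙ e 1 +
    (f.hat (N - g.d) * g.chk N + f.chk (N - g.d) * g.hat N) := by
  have h1 := f.one_le_m
  have h2 := g.one_le_p
  have h3 : g.d = g.m - g.p := rfl
  rw [star, star, add_hmul, (f.hat_isHom _).mul_hmul_e (g.S_isHom _),
    ((f.S_isHom _).sub (f.hat_isHom _)).mul_hmul_e (g.hat_isHom _), sub_right_comm N 1 g.d,
    sub_hmul, ← f.hat_step (by omega), ← g.hat_step (by omega), g.S_eq_right N,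
    f.S_eq_right (N - g.d)]
  noncomm_ring

/-- Beyond the width `f.m + g.m - 1` nothing new happens in `C f g`: the terms that appear are
those where `f` and `g` do not meet, and they cancel. -/
theorem C_step {N : ℤ} (hN : f.m + g.m ≤ N) : C f g N = C f g (N - 1) ⊙ e 1 := by
  rw [C, C, star_step f g hN, star_step g f (by omega), sub_hmul, smul_hmul,
    hat_mul_chk f g hN, hat_mul_chk g f (by omega), smul_add, smul_add, smul_smul,
    mul_comm g.d f.d, sg_mul_self, one_smul]
  abel

/-- The bracket `[f, g]` as an element of the total space. -/
def brk : Elt 𝓟 where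
  val := C f g (f.m + g.m - 1)
  m := f.m + g.m - 1
  p := f.p + g.p - 1
  one_le_m := by have := f.one_le_m; have := g.one_le_m; omega
  one_le_p := by have := f.one_le_p; have := g.one_le_p; omega
  isHom := (C_isHom f g _).congr rfl (by simp only [d]; ring)

theorem brk_d : (brk f g).d = f.d + g.d := by simp only [d, brk]; ring

theorem hat_brk {N : ℤ} (hN : f.m + g.m - 1 ≤ N) : (brk f g).hat N = C f g N := by
  induction N, hN using Int.leInduction with
  | base => simp [hat, brk, hmul_e_zero]
  | succ N hN ih =>
    rw [C_step f g (by omega), add_sub_cancel_right, ← ih,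
      hat_step _ (by simp only [brk]; omega), add_sub_cancel_right]

/-- The defect of `S` from being compatible with brackets. It is caused by overlaps of more than
one wire, for which `[f, g]` contains idle wires on the right. -/
def R (N : ℤ) : Tot 𝓟 := comm f.d f.S g.d g.S N - (brk f g).S N

theorem R_isHom (N : ℤ) : IsHom N (N - (f.d + g.d)) (R f g N) :=
  (comm_isHom f.S_isHom g.S_isHom N).sub (((brk f g).S_isHom N).congr rfl (by rw [brk_d]))

theorem R_step {N : ℤ} (hN : f.m + g.m - 1 ≤ N) :
    R f g N = sg (f.d + g.d) • (e 1 ⊙ R f g (N - 1)) := by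
  rw [R, R, (brk f g).S_eq_left N, hat_brk f g hN, C_eq, brk_d, hmul_sub, smul_sub]
  abel

/-- From `K = f.m + g.m - 2` on, the defect is its value at `K`, moved to the far right. -/
theorem R_pow (j : ℕ) : R f g (f.m + g.m - 2 + j) =
    sg (j * (f.d + g.d)) • (e (j : ℤ) ⊙ R f g (f.m + g.m - 2)) := by
  induction j with
  | zero => simp [sg_zero, e_zero_hmul]
  | succ j ih =>
    rw [R_step f g (by push_cast; omega), Nat.cast_succ, ← add_assoc, add_sub_cancel_right, ih,
      hmul_smul, smul_smul, ← sg_add, ← hmul_assoc, e_hmul_e zero_le_one (by omega)]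
    congr 2
    · ring
    · rw [add_comm]

/-- The defect does not contribute to `[[f, g], h]`: in the relevant width, the leftmost `h` and
the defect at the far right act on disjoint wires. -/
theorem comm_R : comm (f.d + g.d) (R f g) h.d h.S (f.m + g.m + h.m - 2) =
    sg (f.d + g.d + h.d) • (e 1 ⊙
      comm (f.d + g.d) (R f g) h.d h.S (f.m + g.m + h.m - 2 - 1)) := by
  have h1 := h.one_le_m
  have h2 := h.one_le_p
  have h3 : h.d = h.m - h.p := rfl
  set N := f.m + g.m + h.m - 2 with hN
  have key : R f g (N - h.d) * h.hat N =
      sg ((f.d + g.d) * h.d) • (h.hat (N - (f.d + g.d)) * R f g N) := by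
    have e1 := R_pow f g h.p.toNat
    have e2 := R_pow f g h.m.toNat
    rw [show f.m + g.m - 2 + (h.p.toNat : ℤ) = N - h.d by omega] at e1
    rw [show f.m + g.m - 2 + (h.m.toNat : ℤ) = N by omega] at e2
    rw [e1, e2, hat, hat, smul_mul_assoc, mul_smul_comm, smul_smul, ← sg_add,
      show (h.p.toNat : ℤ) = h.p by omega, show (h.m.toNat : ℤ) = h.m by omega,
      show N - h.m = f.m + g.m - 2 by omega,
      show N - (f.d + g.d) - h.m = f.m + g.m - 2 - (f.d + g.d) by omega,
      h.isHom.slide (R_isHom f g _)]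
    congr 1
    rw [h3, show h.p * (f.d + g.d) = (f.d + g.d) * (h.m - h.p) + h.m * (f.d + g.d) -
      2 * ((f.d + g.d) * (h.m - h.p)) by ring, sg_sub, two_mul, sg_add _ ((f.d + g.d) * _),
      sg_mul_self, mul_one]
  have t1 := shift_mul (R_isHom f g) h.S_isHom N
  have t2 := shift_mul h.S_isHom (R_isHom f g) N
  rw [← sub_eq_of_eq_add' (h.S_eq_left _), ← R_step f g (by omega)] at t1 t2
  rw [comm, comm, hmul_sub, hmul_smul, smul_sub, smul_comm, t1, add_comm _ h.d, t2, mul_sub, sub_mul,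
    key, smul_sub]
  abel

/-- `[[f, g], h]` is `(1 - T) [[S f, S g], S h]`, with `T` the signed shift of families. -/
theorem C_brk : C (brk f g) h (f.m + g.m + h.m - 2) =
    comm (f.d + g.d) (comm f.d f.S g.d g.S) h.d h.S (f.m + g.m + h.m - 2) -
    sg (f.d + g.d + h.d) • (e 1 ⊙
      comm (f.d + g.d) (comm f.d f.S g.d g.S) h.d h.S (f.m + g.m + h.m - 2 - 1)) := by
  have hs : ∀ N, comm (f.d + g.d) (brk f g).S h.d h.S N =
      comm (f.d + g.d) (comm f.d f.S g.d g.S) h.d h.S N -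
      comm (f.d + g.d) (R f g) h.d h.S N := by
    intro N
    have hR : ∀ N, (brk f g).S N = comm f.d f.S g.d g.S N - R f g N := by
      intro N; rw [R]; abel
    rw [comm, comm.eq_1 _ (comm _ _ _ _), comm.eq_1 _ (R f g), hR, hR, sub_mul, mul_sub, smul_sub]
    abel
  rw [C_eq, brk_d, hs, hs, hmul_sub, smul_sub, ← comm_R]
  abel

end Elt

/-- The graded Jacobi identity for graded commutators in an associative algebra. -/
theorem comm_jacobi (a b c : ℤ) (X Y Z : ℤ → Tot 𝓟) (N : ℤ) :
    sg (a * c) • comm (a + b) (comm a X b Y) c Z N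
      + sg (b * a) • comm (b + c) (comm b Y c Z) a X N
      + sg (c * b) • comm (c + a) (comm c Z a X) b Y N = 0 := by
  simp only [comm, add_mul, sg_add, mul_comm b a, mul_comm c b, mul_comm c a, sub_sub,
    add_comm b a, add_comm c b, add_comm c a]
  rcases sg_cases (a * b) with h1 | h1 <;> rcases sg_cases (b * c) with h2 | h2 <;>
    rcases sg_cases (a * c) with h3 | h3 <;> simp only [h1, h2, h3] <;> noncomm_ring

theorem Elt.jacobi (f g h : Elt 𝓟) :
    sg (f.d * h.d) • (Elt.brk (Elt.brk f g) h).val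
      + sg (g.d * f.d) • (Elt.brk (Elt.brk g h) f).val
      + sg (h.d * g.d) • (Elt.brk (Elt.brk h f) g).val = 0 := by
  have hv : ∀ f g h : Elt 𝓟, (Elt.brk (Elt.brk f g) h).val =
      Elt.C (Elt.brk f g) h (f.m + g.m + h.m - 2) := by
    intro f g h
    simp only [Elt.brk]; congr 1; ring
  rw [hv, hv, hv, Elt.C_brk, Elt.C_brk, Elt.C_brk,
    show g.m + h.m + f.m - 2 = f.m + g.m + h.m - 2 by ring,
    show h.m + f.m + g.m - 2 = f.m + g.m + h.m - 2 by ring,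
    show g.d + h.d + f.d = f.d + g.d + h.d by ring,
    show h.d + f.d + g.d = f.d + g.d + h.d by ring]
  have j1 := comm_jacobi f.d g.d h.d f.S g.S h.S (f.m + g.m + h.m - 2)
  have j2 := comm_jacobi f.d g.d h.d f.S g.S h.S (f.m + g.m + h.m - 2 - 1)
  apply_fun (fun x => sg (f.d + g.d + h.d) • (e 1 ⊙ x)) at j2
  simp only [hmul_add, hmul_smul, smul_add, hmul_zero, smul_zero] at j2
  rw [← sub_eq_zero_of_eq (j1.trans j2.symm)]
  simp only [smul_sub, smul_comm (sg (f.d + g.d + h.d))]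
  abel

/-! ### Comparison with the operations on the components -/

/-- An element of `P m p` with `m, p ≥ 1` as an `Elt`. -/
def Elt.of {m p : ℕ} (hm : 1 ≤ m) (hp : 1 ≤ p) (f : 𝓟.P m p) : Elt 𝓟 where
  val := inc f
  m := m
  p := p
  one_le_m := by exact_mod_cast hm
  one_le_p := by exact_mod_cast hp
  isHom := isHom_inc f

theorem inc_star {m p n q : ℕ} (hm : 1 ≤ m) (hp : 1 ≤ p) (hn : 1 ≤ n) (hq : 1 ≤ q)
    (f : 𝓟.P m p) (g : 𝓟.P n q) :
    inc (𝓟.star hm hq f g) =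
      Elt.star (Elt.of hm hp f) (Elt.of hn hq g) ((m : ℤ) + n - 1) := by
  have hA : ((m : ℤ) + n - 1 - (Elt.of hn hq g).d) = m + q - 1 := by
    simp only [Elt.d, Elt.of]; ring
  have hF : (Elt.of hm hp f).hat ((m : ℤ) + q - 1) = inc (𝓟.hcomp f (𝓟.ids (q - 1))) := by
    rw [Elt.hat, ← inc_hmul_inc, ← e_nat]
    simp only [Elt.of]
    congr 2; omega
  have hG : (Elt.of hn hq g).hat ((m : ℤ) + n - 1) = inc (𝓟.hcomp g (𝓟.ids (m - 1))) := by
    rw [Elt.hat, ← inc_hmul_inc, ← e_nat]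
    simp only [Elt.of]
    congr 2; omega
  rw [LinearPROP.star, inc_pcast, map_add, map_sum, map_sum, Elt.star, hA, hF, hG]
  congr 1
  · rw [Elt.S, show ((m : ℤ) + n - 1 - (Elt.of hn hq g).m + 1).toNat = m by
      simp only [Elt.of]; omega, Finset.sum_range, Finset.mul_sum]
    refine Finset.sum_congr rfl fun i _ => ?_
    have hi := i.isLt
    rw [map_zsmul, ← inc_mul_inc, inc_pcast, ← inc_hmul_inc, ← inc_hmul_inc, ← e_nat, ← e_nat,
      mul_smul_comm]
    simp only [Elt.of, Elt.d]
    congr 1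
    · rw [← sg_neg, ← mul_neg, neg_sub]; rfl
    · rw [show ((m - 1 - (i : ℕ) : ℕ) : ℤ) = m + n - 1 - n - (i : ℕ) by omega,
        e_nat (i : ℕ), ← inc_hmul_inc]
  · have hS : (Elt.of hm hp f).S ((m : ℤ) + q - 1) - inc (𝓟.hcomp f (𝓟.ids (q - 1))) =
        ∑ i : Fin (q - 1), sg ((((i : ℕ) : ℤ) + 1) * ((p : ℤ) - (m : ℤ))) •
          (inc (𝓟.ids ((i : ℕ) + 1)) ⊙ inc f ⊙ inc (𝓟.ids (q - 1 - ((i : ℕ) + 1)))) := by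
      rw [← hF, Elt.S, show ((m : ℤ) + q - 1 - (Elt.of hm hp f).m + 1).toNat = q - 1 + 1 by
        simp only [Elt.of]; omega, Finset.sum_range_succ', Finset.sum_range, Elt.hat]
      simp only [Nat.cast_zero, zero_mul, sg_zero, one_smul, e_zero_hmul, sub_zero,
        add_sub_cancel_right]
      refine Finset.sum_congr rfl fun i _ => ?_
      have hi := i.isLt
      rw [← e_nat, ← e_nat]
      simp only [Elt.of, Elt.d]
      congr 1
      · rw [← sg_neg, ← mul_neg, neg_sub]; push_cast; rfl
      · congr 2; omega
    rw [hS, Finset.sum_mul]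
    refine Finset.sum_congr rfl fun i _ => ?_
    rw [map_zsmul, inc_pcast, ← inc_mul_inc, inc_pcast, inc_hmul_inc, inc_hmul_inc,
      smul_mul_assoc]
    rfl

theorem Elt.ext' {f g : Elt 𝓟} (h1 : f.val = g.val) (h2 : f.m = g.m) (h3 : f.p = g.p) :
    f = g := by
  cases f; cases g; simp_all

theorem of_brk {m p n q : ℕ} (hm : 1 ≤ m) (hp : 1 ≤ p) (hn : 1 ≤ n) (hq : 1 ≤ q)
    (f : 𝓟.P m p) (g : 𝓟.P n q) (h1 : 1 ≤ m + n - 1) (h2 : 1 ≤ p + q - 1) :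
    Elt.of h1 h2 (𝓟.brk hm hp hn hq f g) = Elt.brk (Elt.of hm hp f) (Elt.of hn hq g) := by
  refine Elt.ext' ?_ (by simp only [Elt.of, Elt.brk]; omega) (by simp only [Elt.of, Elt.brk]; omega)
  change inc (𝓟.brk hm hp hn hq f g) = Elt.C _ _ ((m : ℤ) + n - 1)
  rw [LinearPROP.brk, map_sub, map_zsmul, inc_pcast, inc_star hm hp hn hq, inc_star hn hq hm hp,
    add_comm (n : ℤ) m]
  rfl

end

end Tot

/-- for a `k`-linear non-symmetric PROP `𝓟`, the bracket
`[f, g] = f ⋆ g − (−1)^{(m−p)(n−q)} g ⋆ f` makes the positive total space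
`⊕_{m,p ≥ 1} P(m,p)` (graded by `deg f = m − p`) into a ℤ-graded Lie algebra:
it is graded antisymmetric and satisfies the graded Jacobi identity. -/
theorem linearPROP_bracket_graded_lie (𝓟 : LinearPROP k)
    (m p n q l r : ℕ) (hm : 1 ≤ m) (hp : 1 ≤ p) (hn : 1 ≤ n) (hq : 1 ≤ q)
    (hl : 1 ≤ l) (hr : 1 ≤ r)
    (f : 𝓟.P m p) (g : 𝓟.P n q) (h : 𝓟.P l r) :
    𝓟.brk hm hp hn hq f g
        = -(((((m : ℤ) - (p : ℤ)) * ((n : ℤ) - (q : ℤ))).negOnePow : ℤ) •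
            pcast (P := 𝓟.P) (show n + m - 1 = m + n - 1 by omega)
              (show q + p - 1 = p + q - 1 by omega) (𝓟.brk hn hq hm hp g f))
      ∧ ((((((m : ℤ) - (p : ℤ)) * ((l : ℤ) - (r : ℤ))).negOnePow : ℤ) •
            pcast (P := 𝓟.P) (show m + n - 1 + l - 1 = m + n + l - 2 by omega)
              (show p + q - 1 + r - 1 = p + q + r - 2 by omega)
              (𝓟.brk (by omega) (by omega) hl hr (𝓟.brk hm hp hn hq f g) h))
          + (((((n : ℤ) - (q : ℤ)) * ((m : ℤ) - (p : ℤ))).negOnePow : ℤ) •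
              pcast (P := 𝓟.P) (show n + l - 1 + m - 1 = m + n + l - 2 by omega)
                (show q + r - 1 + p - 1 = p + q + r - 2 by omega)
                (𝓟.brk (by omega) (by omega) hm hp (𝓟.brk hn hq hl hr g h) f))
          + (((((l : ℤ) - (r : ℤ)) * ((n : ℤ) - (q : ℤ))).negOnePow : ℤ) •
              pcast (P := 𝓟.P) (show l + m - 1 + n - 1 = m + n + l - 2 by omega)
                (show r + p - 1 + q - 1 = p + q + r - 2 by omega)
                (𝓟.brk (by omega) (by omega) hn hq (𝓟.brk hl hr hm hp h f) g))
        = 0) := by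
  constructor
  · unfold LinearPROP.brk
    apply Tot.inc_injective
    simp only [map_neg, map_sub, map_zsmul, Tot.inc_pcast, smul_sub, smul_smul]
    have hs := Tot.sg_mul_self (((m : ℤ) - p) * ((n : ℤ) - q))
    unfold Tot.sg at hs
    rw [mul_comm ((n : ℤ) - q), hs, one_smul]
    abel
  · apply Tot.inc_injective
    simp only [map_add, map_zsmul, Tot.inc_pcast, map_zero]
    have key := Tot.Elt.jacobi (Tot.Elt.of hm hp f) (Tot.Elt.of hn hq g) (Tot.Elt.of hl hr h)
    rw [← Tot.of_brk hm hp hn hq f g (by omega) (by omega),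
      ← Tot.of_brk _ _ hl hr _ h (by omega) (by omega),
      ← Tot.of_brk hn hq hl hr g h (by omega) (by omega),
      ← Tot.of_brk _ _ hm hp _ f (by omega) (by omega),
      ← Tot.of_brk hl hr hm hp h f (by omega) (by omega),
      ← Tot.of_brk _ _ hn hq _ g (by omega) (by omega)] at key
    exact key
end

section
/- Let k be a commutative ring and V a k-module, and for m, p ≥ 1 put End_V(m, p) := Hom_k(V^{⊗m}, V^{⊗p}). Then the bracket [f, g] := f ⋆ g − (−1)^{(m−p)(n−q)} g ⋆ f on ⊕_{m,p ≥ 1} End_V(m, p), graded by deg f = m − p for f ∈ End_V(m, p), is graded antisymmetric, [f, g] = −(−1)^{(m−p)(n−q)} [g, f], and satisfies the graded Jacobi identity (−1)^{(m−p)(l−r)} [[f, g], h] + (−1)^{(n−q)(m−p)} [[g, h], f] + (−1)^{(l−r)(n−q)} [[h, f], g] = 0 for all f ∈ End_V(m, p), g ∈ End_V(n, q), h ∈ End_V(l, r). -/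
/-!
Write `f_j` for `id^{⊗j} ⊗ f ⊗ id` acting on long tensor powers. The products `f_j g_i` come in two
kinds. If the inputs of `f_j` meet the outputs of `g_i`, then up to a common shift the product is one
of the terms of `f ⋆ g`. If they do not meet, `f` and `g` can be exchanged:
`f_{j+q} g_0 = g_0 f_{j+n}` for `g` with `n` inputs and `q` outputs. Hence for the formal sums
`F = ∑_t (-1)^{t deg f} f_t` the non-overlapping terms cancel in the graded commutator, which is the
formal sum attached to the bracket `[f, g]`. The graded Jacobi identity is thus inherited from the
associative algebra of operators.

The operators live in the ring of endomorphisms of the tensor algebra `T(V)`, where the shift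
`s φ = id_V ⊗ φ` is a non-unital ring endomorphism. The formal sum is characterised by
`f = F - (-1)^{deg f} s F` (`IsHat`), an equation from which `f` is recovered directly, and the
exchange rule reads `s^p φ * f = f * s^m φ` (`HasArity`). From these two facts `IsHat.brk` and
`HasArity.brk` give the Jacobi identity `aBrk_jacobi` in any ring with such an endomorphism.
Identities between maps `V^{⊗m} → V^{⊗p}` are read off from identities between operators through
`Represents`, which prescribes an operator on words with at least `m` letters only: the summands of
`f ⋆ g` carry idle strands, so the operator for `f ⋆ g` need not vanish on shorter words.
-/

open scoped TensorProduct

/-- The `n`-th tensor power `V^{⊗n}` of the `k`-module `V`. -/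
abbrev TP (k V : Type) [CommRing k] [AddCommGroup V] [Module k V] (n : ℕ) : Type :=
  ⨂[k] _ : Fin n, V

variable (k V : Type) [CommRing k] [AddCommGroup V] [Module k V]

/-- The canonical isomorphism `V^{⊗a} ⊗ V^{⊗b} ≅ V^{⊗(a+b)}`. -/
noncomputable def tpe (a b : ℕ) : (TP k V a ⊗[k] TP k V b) ≃ₗ[k] TP k V (a + b) :=
  (PiTensorProduct.tmulEquiv (R := k) (M := V) (ι := Fin a) (ι₂ := Fin b)).trans
    (PiTensorProduct.reindex k (fun _ : Fin a ⊕ Fin b => V) finSumFinEquiv)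

/-- The tensor product of linear maps between tensor powers, regarded as a map between
tensor powers via the canonical isomorphisms. -/
noncomputable def tmul2 {m p n q : ℕ} (f : TP k V m →ₗ[k] TP k V p)
    (g : TP k V n →ₗ[k] TP k V q) : TP k V (m + n) →ₗ[k] TP k V (p + q) :=
  (tpe k V p q).toLinearMap ∘ₗ TensorProduct.map f g ∘ₗ (tpe k V m n).symm.toLinearMap

/-- Transport of a linear map between tensor powers along equalities of the exponents. -/
def hcast {m p : ℕ} (m' p' : ℕ) (h1 : m = m') (h2 : p = p')
    (f : TP k V m →ₗ[k] TP k V p) : TP k V m' →ₗ[k] TP k V p' := by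
  subst h1; subst h2; exact f

/-- The operation `f ⋆ g := Σ_{i=1}^{m} (−1)^{(i−1)(q−n)} f ⋆_i g
+ Σ_{i=1}^{q−1} (−1)^{i(p−m)} f ⋆_{−i} g`, where
`f ⋆_i g = (f ⊗ id^{⊗(q−1)}) ∘ (id^{⊗(i−1)} ⊗ g ⊗ id^{⊗(m−i)})` for `1 ≤ i ≤ m` and
`f ⋆_{−i} g = (id^{⊗i} ⊗ f ⊗ id^{⊗(q−1−i)}) ∘ (g ⊗ id^{⊗(m−1)})` for `1 ≤ i ≤ q−1`. -/
noncomputable def starOp {m p n q : ℕ} (hm : 1 ≤ m) (hq : 1 ≤ q)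
    (f : TP k V m →ₗ[k] TP k V p) (g : TP k V n →ₗ[k] TP k V q) :
    TP k V (m + n - 1) →ₗ[k] TP k V (p + q - 1) :=
  hcast k V (m + n - 1) (p + q - 1) rfl (by omega)
    ((∑ i : Fin m, ((((i : ℕ) : ℤ) * ((q : ℤ) - (n : ℤ))).negOnePow : ℤ) •
        ((tmul2 k V f (LinearMap.id (M := TP k V (q - 1)))) ∘ₗ
          hcast k V (m + n - 1) (m + (q - 1)) (by have := i.isLt; omega)
            (by have := i.isLt; omega)
            (tmul2 k V (tmul2 k V (LinearMap.id (M := TP k V (i : ℕ))) g)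
              (LinearMap.id (M := TP k V (m - 1 - (i : ℕ)))))))
      + ∑ i : Fin (q - 1), (((((i : ℕ) : ℤ) + 1) * ((p : ℤ) - (m : ℤ))).negOnePow : ℤ) •
          hcast k V (m + n - 1) (p + (q - 1)) (by omega) rfl
            ((hcast k V (q + (m - 1)) (p + (q - 1)) (by have := i.isLt; omega)
                (by have := i.isLt; omega)
                (tmul2 k V (tmul2 k V (LinearMap.id (M := TP k V ((i : ℕ) + 1))) f)
                  (LinearMap.id (M := TP k V (q - 1 - ((i : ℕ) + 1)))))) ∘ₗ
              tmul2 k V g (LinearMap.id (M := TP k V (m - 1)))))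

/-- The bracket `[f, g] := f ⋆ g − (−1)^{(m−p)(n−q)} g ⋆ f` on `⊕_{m,p ≥ 1} End_V(m, p)`. -/
noncomputable def brkOp {m p n q : ℕ} (hm : 1 ≤ m) (hp : 1 ≤ p) (hn : 1 ≤ n) (hq : 1 ≤ q)
    (f : TP k V m →ₗ[k] TP k V p) (g : TP k V n →ₗ[k] TP k V q) :
    TP k V (m + n - 1) →ₗ[k] TP k V (p + q - 1) :=
  starOp k V hm hq f g
    - (((((m : ℤ) - (p : ℤ)) * ((n : ℤ) - (q : ℤ))).negOnePow : ℤ) •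
        hcast k V (m + n - 1) (p + q - 1) (by omega) (by omega) (starOp k V hn hp g f))

/-! ### Signs -/

/-- The sign `(-1)^x`, as an integer. -/
abbrev sg (x : ℤ) : ℤ := (x.negOnePow : ℤ)

lemma sg_add (x y : ℤ) : sg (x + y) = sg x * sg y := by
  simp [sg, Int.negOnePow_add]

lemma sg_neg (x : ℤ) : sg (-x) = sg x := by simp [sg]

lemma sg_mul_self (x : ℤ) : sg x * sg x = 1 := by
  simp [sg, ← Units.val_mul]

/-! ### The Lie algebra attached to a ring with a shift -/

section Abstract

variable {R : Type} [Ring R] (s : R →ₙ+* R)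

/-- The element `f` behaves like an operation with `m` inputs and `p` outputs sitting at the left
end: it commutes, up to the change of position, with everything standing to its right. -/
def HasArity (m p : ℕ) (f : R) : Prop := ∀ φ : R, (s ^ p) φ * f = f * (s ^ m) φ

/-- The operation `f ⋆ g` with `id^{⊗i} ⊗ f` replaced by the `i`-fold shift of `f`. -/
def aStar (m p n q : ℕ) (f g : R) : R :=
  ∑ i ∈ Finset.range m, sg ((i : ℤ) * ((q : ℤ) - n)) • (f * (s ^ i) g)
    + ∑ i ∈ Finset.range (q - 1), sg (((i : ℤ) + 1) * ((p : ℤ) - m)) • ((s ^ (i + 1)) f * g)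

/-- The bracket `f ⋆ g - (-1)^{(m-p)(n-q)} g ⋆ f` built from `aStar`. -/
def aBrk (m p n q : ℕ) (f g : R) : R :=
  aStar s m p n q f g - sg (((m : ℤ) - p) * ((n : ℤ) - q)) • aStar s n q m p g f

/-- `F` is the formal sum `∑ t, (-1)^{td} s^t f`, expressed by the equation it solves. -/
def IsHat (d : ℤ) (F f : R) : Prop := f = F - sg d • s F

/-- The graded commutator of elements of degrees `d` and `e`. -/
def gComm (d e : ℤ) (F G : R) : R := F * G - sg (d * e) • (G * F)

variable {s}

lemma spow_succ_apply (i : ℕ) (x : R) : (s ^ (i + 1)) x = (s ^ i) (s x) := by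
  rw [pow_succ]; rfl

lemma spow_succ_apply' (i : ℕ) (x : R) : (s ^ (i + 1)) x = s ((s ^ i) x) := by
  rw [pow_succ']; rfl

lemma spow_add_apply (i j : ℕ) (x : R) : (s ^ (i + j)) x = (s ^ i) ((s ^ j) x) := by
  rw [pow_add]; rfl

lemma spow_zero_apply (x : R) : (s ^ 0) x = x := by
  rw [pow_zero]; rfl

lemma IsHat.expand {d : ℤ} {F f : R} (h : IsHat s d F f) (N : ℕ) :
    F = ∑ i ∈ Finset.range N, sg (i * d) • (s ^ i) f + sg (N * d) • (s ^ N) F := by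
  induction N with
  | zero => simp
  | succ N ih =>
    have h1 : (s ^ N) F = (s ^ N) f + sg d • (s ^ (N + 1)) F := by
      have h' := congrArg (s ^ N) h
      rw [map_sub, map_zsmul, ← spow_succ_apply] at h'
      rw [h']; abel
    rw [Finset.sum_range_succ, add_assoc]
    have h2 : sg (((N + 1 : ℕ) : ℤ) * d) = sg (N * d) * sg d := by
      rw [← sg_add]; congr 1; push_cast; ring
    rw [h2, mul_smul, ← smul_add, ← h1]
    exact ih

/-- In the product `F * G`, the overlapping terms touching the first strand are those of `f ⋆ g`;
the last two summands collect the non-overlapping ones. -/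
lemma hat_mul {m p n q : ℕ} (hq : 1 ≤ q) {F G f g : R}
    (hF : IsHat s ((m : ℤ) - p) F f) (hG : IsHat s ((n : ℤ) - q) G g) :
    F * G - sg (((m : ℤ) - p) + ((n : ℤ) - q)) • s (F * G)
      = aStar s m p n q f g + sg (m * ((n : ℤ) - q)) • (f * (s ^ m) G)
        + sg (q * ((m : ℤ) - p)) • ((s ^ q) F * g) := by
  have e1 : f * G = ∑ i ∈ Finset.range m, sg ((i : ℤ) * ((q : ℤ) - n)) • (f * (s ^ i) g)
      + sg (m * ((n : ℤ) - q)) • (f * (s ^ m) G) := by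
    conv_lhs => rw [hG.expand m]
    rw [mul_add, Finset.mul_sum, mul_smul_comm]
    congr 1
    refine Finset.sum_congr rfl fun i _ => ?_
    rw [mul_smul_comm, ← sg_neg]
    congr 2; ring
  have e2 : F = f + ∑ i ∈ Finset.range (q - 1), sg (((i : ℤ) + 1) * ((p : ℤ) - m)) • (s ^ (i + 1)) f
      + sg (q * ((m : ℤ) - p)) • (s ^ q) F := by
    conv_lhs => rw [hF.expand q]
    congr 1
    obtain ⟨q, rfl⟩ := Nat.exists_eq_add_of_le' hq
    rw [Finset.sum_range_succ', add_comm]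
    congr 1
    · simp
    · refine Finset.sum_congr rfl fun i _ => ?_
      rw [← sg_neg]
      congr 2; push_cast; ring
  have e3 : sg ((m : ℤ) - p) • (s F * g)
      = ∑ i ∈ Finset.range (q - 1), sg (((i : ℤ) + 1) * ((p : ℤ) - m)) • ((s ^ (i + 1)) f * g)
        + sg (q * ((m : ℤ) - p)) • ((s ^ q) F * g) := by
    have h4 : sg ((m : ℤ) - p) • s F = F - f := by
      rw [eq_sub_iff_add_eq', ← eq_sub_iff_add_eq]
      exact hF
    rw [← smul_mul_assoc, h4]
    nth_rewrite 1 [e2]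
    rw [add_assoc, add_sub_cancel_left, add_mul, Finset.sum_mul, smul_mul_assoc]
    congr 1
    exact Finset.sum_congr rfl fun i _ => smul_mul_assoc _ _ _
  have e4 : F * G - sg (((m : ℤ) - p) + ((n : ℤ) - q)) • s (F * G)
      = f * G + sg ((m : ℤ) - p) • (s F * g) := by
    rw [map_mul, sg_add]
    have hf := hF
    have hg := hG
    unfold IsHat at hf hg
    generalize sg ((m : ℤ) - p) = a at *
    generalize sg ((n : ℤ) - q) = b at *
    rw [hf, hg]
    simp only [sub_mul, mul_sub, smul_mul_assoc, mul_smul_comm, smul_sub, mul_smul]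
    abel
  rw [e4, e1, e3, aStar]
  abel

/-- The hat of the bracket is the graded commutator of the hats: the non-overlapping terms of
`F * G` and `G * F` cancel because of `HasArity`. -/
lemma IsHat.brk {m p n q : ℕ} (hp : 1 ≤ p) (hq : 1 ≤ q) {F G f g : R}
    (hF : IsHat s ((m : ℤ) - p) F f) (hG : IsHat s ((n : ℤ) - q) G g)
    (hf : HasArity s m p f) (hg : HasArity s n q g) :
    IsHat s (((m : ℤ) - p) + ((n : ℤ) - q)) (gComm ((m : ℤ) - p) ((n : ℤ) - q) F G)
      (aBrk s m p n q f g) := by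
  have h1 := hat_mul hq hF hG
  have h2 := hat_mul hp hG hF
  rw [hg F] at h1
  rw [hf G, add_comm ((n : ℤ) - q)] at h2
  have s1 : sg (m * ((n : ℤ) - q)) = sg (((m : ℤ) - p) * ((n : ℤ) - q)) * sg (p * ((n : ℤ) - q)) := by
    rw [← sg_add]; congr 1; ring
  have s2 : sg (n * ((m : ℤ) - p)) = sg (((m : ℤ) - p) * ((n : ℤ) - q)) * sg (q * ((m : ℤ) - p)) := by
    rw [← sg_add]; congr 1; ring
  have s3 := sg_mul_self (((m : ℤ) - p) * ((n : ℤ) - q))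
  rw [s1] at h1
  rw [s2] at h2
  unfold IsHat gComm aBrk
  rw [map_sub, map_zsmul, ← sub_eq_iff_eq_add.mpr (sub_eq_iff_eq_add.mpr h1),
    ← sub_eq_iff_eq_add.mpr (sub_eq_iff_eq_add.mpr h2)]
  generalize sg (((m : ℤ) - p) * ((n : ℤ) - q)) = c at *
  have s4 : ∀ x : R, c • c • x = x := fun x => by rw [smul_smul, s3, one_smul]
  simp only [smul_sub, mul_smul, s4, smul_comm c (sg (((m : ℤ) - p) + ((n : ℤ) - q)))]
  abel

lemma HasArity.zsmul {m p : ℕ} {f : R} (hf : HasArity s m p f) (a : ℤ) :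
    HasArity s m p (a • f) := fun φ => by
  rw [mul_smul_comm, smul_mul_assoc, hf]

lemma HasArity.add {m p : ℕ} {f g : R} (hf : HasArity s m p f) (hg : HasArity s m p g) :
    HasArity s m p (f + g) := fun φ => by
  rw [mul_add, add_mul, hf, hg]

lemma HasArity.sum {m p : ℕ} {ι : Type} (t : Finset ι) (f : ι → R)
    (hf : ∀ i ∈ t, HasArity s m p (f i)) : HasArity s m p (∑ i ∈ t, f i) := fun φ => by
  rw [Finset.mul_sum, Finset.sum_mul]
  exact Finset.sum_congr rfl fun i hi => hf i hi φ

lemma HasArity.mul {m p q : ℕ} {f g : R} (hf : HasArity s q p f) (hg : HasArity s m q g) :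
    HasArity s m p (f * g) := fun φ => by
  rw [← mul_assoc, hf, mul_assoc, hg, mul_assoc]

/-- Adding `i` strands on the left and `j` on the right. -/
lemma HasArity.pad {m p : ℕ} {f : R} (hf : HasArity s m p f) (i j : ℕ) :
    HasArity s (i + m + j) (i + p + j) ((s ^ i) f) := fun φ => by
  rw [add_assoc, add_assoc, spow_add_apply, spow_add_apply i, spow_add_apply p, spow_add_apply m,
    ← map_mul, ← map_mul, hf]

lemma HasArity.star {m p n q : ℕ} (hm : 1 ≤ m) (hq : 1 ≤ q) {f g : R}
    (hf : HasArity s m p f) (hg : HasArity s n q g) :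
    HasArity s (m + n - 1) (p + q - 1) (aStar s m p n q f g) := by
  refine HasArity.add (HasArity.sum _ _ fun i hi => HasArity.zsmul ?_ _)
    (HasArity.sum _ _ fun i hi => HasArity.zsmul ?_ _)
  · have hi := Finset.mem_range.mp hi
    have h1 := hf.pad 0 (q - 1)
    have h2 := hg.pad i (m - 1 - i)
    rw [spow_zero_apply] at h1
    refine HasArity.mul (q := m + q - 1) ?_ ?_
    · convert h1 using 1 <;> omega
    · convert h2 using 1 <;> omega
  · have hi := Finset.mem_range.mp hi
    have h1 := hf.pad (i + 1) (q - 1 - (i + 1))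
    have h2 := hg.pad 0 (m - 1)
    rw [spow_zero_apply] at h2
    refine HasArity.mul (q := m + q - 1) ?_ ?_
    · convert h1 using 1 <;> omega
    · convert h2 using 1 <;> omega

lemma HasArity.brk {m p n q : ℕ} (hm : 1 ≤ m) (hp : 1 ≤ p) (hn : 1 ≤ n) (hq : 1 ≤ q) {f g : R}
    (hf : HasArity s m p f) (hg : HasArity s n q g) :
    HasArity s (m + n - 1) (p + q - 1) (aBrk s m p n q f g) := by
  have h1 := hf.star hm hq hg
  have h2 := hg.star hn hp hf
  rw [add_comm n, add_comm q] at h2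
  rw [aBrk, sub_eq_add_neg, ← neg_smul]
  exact h1.add (h2.zsmul _)

lemma IsHat.brk_brk {m p n q l r : ℕ} (hm : 1 ≤ m) (hp : 1 ≤ p) (hn : 1 ≤ n) (hq : 1 ≤ q)
    (hr : 1 ≤ r) {F G H f g h : R}
    (hF : IsHat s ((m : ℤ) - p) F f) (hG : IsHat s ((n : ℤ) - q) G g)
    (hH : IsHat s ((l : ℤ) - r) H h)
    (hf : HasArity s m p f) (hg : HasArity s n q g) (hh : HasArity s l r h) :
    IsHat s (((m : ℤ) - p) + ((n : ℤ) - q) + ((l : ℤ) - r))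
      (gComm (((m : ℤ) - p) + ((n : ℤ) - q)) ((l : ℤ) - r)
        (gComm ((m : ℤ) - p) ((n : ℤ) - q) F G) H)
      (aBrk s (m + n - 1) (p + q - 1) l r (aBrk s m p n q f g) h) := by
  have e : (((m + n - 1 : ℕ) : ℤ) - ((p + q - 1 : ℕ) : ℤ)) = ((m : ℤ) - p) + ((n : ℤ) - q) := by
    omega
  have h1 := hF.brk hp hq hG hf hg
  rw [← e] at h1
  have h2 := h1.brk (by omega) hr hH (hf.brk hm hp hn hq hg) hh
  rwa [e] at h2

/-- The graded Jacobi identity for graded commutators in an associative ring. -/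
lemma gComm_jacobi (a b c : ℤ) (F G H : R) :
    sg (a * c) • gComm (a + b) c (gComm a b F G) H
      + sg (b * a) • gComm (b + c) a (gComm b c G H) F
      + sg (c * b) • gComm (c + a) b (gComm c a H F) G = 0 := by
  have h1 := sg_mul_self (a * b)
  have h2 := sg_mul_self (b * c)
  have h3 := sg_mul_self (a * c)
  unfold gComm
  simp only [add_mul, sg_add, mul_comm b a, mul_comm c a, mul_comm c b]
  generalize sg (a * b) = x at *
  generalize sg (b * c) = y at *
  generalize sg (a * c) = z at *
  have x2 : ∀ u : R, x • x • u = u := fun u => by rw [smul_smul, h1, one_smul]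
  have y2 : ∀ u : R, y • y • u = u := fun u => by rw [smul_smul, h2, one_smul]
  have z2 : ∀ u : R, z • z • u = u := fun u => by rw [smul_smul, h3, one_smul]
  simp only [sub_mul, mul_sub, smul_mul_assoc, mul_smul_comm, smul_sub, mul_smul, mul_assoc,
    smul_comm y x, smul_comm z x, smul_comm z y, x2, y2, z2]
  abel

/-- The graded Jacobi identity for `aBrk`, deduced from the one for graded commutators. -/
lemma aBrk_jacobi {m p n q l r : ℕ} (hm : 1 ≤ m) (hp : 1 ≤ p) (hn : 1 ≤ n) (hq : 1 ≤ q)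
    (hl : 1 ≤ l) (hr : 1 ≤ r) {F G H f g h : R}
    (hF : IsHat s ((m : ℤ) - p) F f) (hG : IsHat s ((n : ℤ) - q) G g)
    (hH : IsHat s ((l : ℤ) - r) H h)
    (hf : HasArity s m p f) (hg : HasArity s n q g) (hh : HasArity s l r h) :
    sg (((m : ℤ) - p) * ((l : ℤ) - r)) •
        aBrk s (m + n - 1) (p + q - 1) l r (aBrk s m p n q f g) h
      + sg (((n : ℤ) - q) * ((m : ℤ) - p)) •
        aBrk s (n + l - 1) (q + r - 1) m p (aBrk s n q l r g h) f
      + sg (((l : ℤ) - r) * ((n : ℤ) - q)) •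
        aBrk s (l + m - 1) (r + p - 1) n q (aBrk s l r m p h f) g = 0 := by
  have h1 := hF.brk_brk hm hp hn hq hr hG hH hf hg hh
  have h2 := hG.brk_brk hn hq hl hr hp hH hF hg hh hf
  have h3 := hH.brk_brk hl hr hm hp hq hF hG hh hf hg
  have hJ := gComm_jacobi ((m : ℤ) - p) ((n : ℤ) - q) ((l : ℤ) - r) F G H
  have hs := congrArg s hJ
  simp only [map_add, map_zsmul, map_zero] at hs
  unfold IsHat at h1 h2 h3
  rw [show ((n : ℤ) - q) + ((l : ℤ) - r) + ((m : ℤ) - p)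
    = ((m : ℤ) - p) + ((n : ℤ) - q) + ((l : ℤ) - r) by ring] at h2
  rw [show ((l : ℤ) - r) + ((m : ℤ) - p) + ((n : ℤ) - q)
    = ((m : ℤ) - p) + ((n : ℤ) - q) + ((l : ℤ) - r) by ring] at h3
  rw [h1, h2, h3]
  generalize sg (((m : ℤ) - p) + ((n : ℤ) - q) + ((l : ℤ) - r)) = e
  simp only [smul_sub, smul_comm _ e]
  rw [sub_add_sub_comm, sub_add_sub_comm, ← smul_add, ← smul_add, hJ, hs, smul_zero, sub_zero]

end Abstract

/-! ### Operators on the tensor algebra -/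

section Operators

open TensorAlgebra

variable {k V}

/-- The action of `V` on `T(V) × Q` by `v · (x, y) = (v x, step v (x, y))`. -/
noncomputable def recAct {Q : Type} [AddCommGroup Q] [Module k Q]
    (step : V →ₗ[k] (TensorAlgebra k V × Q) →ₗ[k] Q) :
    V →ₗ[k] Module.End k (TensorAlgebra k V × Q) where
  toFun v := (LinearMap.mulLeft k (ι k v) ∘ₗ LinearMap.fst k _ _).prod (step v)
  map_add' v w := by
    refine LinearMap.ext fun x => Prod.ext ?_ ?_ <;> simp [add_mul]
  map_smul' a v := by
    refine LinearMap.ext fun x => Prod.ext ?_ ?_ <;> simp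

/-- The linear map on the tensor algebra defined by left recursion: `1 ↦ q₀` and
`v x ↦ step v (x, value at x)`. -/
noncomputable def tRec {Q : Type} [AddCommGroup Q] [Module k Q] (q₀ : Q)
    (step : V →ₗ[k] (TensorAlgebra k V × Q) →ₗ[k] Q) : TensorAlgebra k V →ₗ[k] Q :=
  LinearMap.snd k _ _ ∘ₗ
    LinearMap.applyₗ ((1, q₀) : TensorAlgebra k V × Q) ∘ₗ (lift k (recAct step)).toLinearMap

lemma lift_recAct_fst {Q : Type} [AddCommGroup Q] [Module k Q]
    (step : V →ₗ[k] (TensorAlgebra k V × Q) →ₗ[k] Q) (x : TensorAlgebra k V) :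
    ∀ w, (lift k (recAct step) x w).1 = x * w.1 := by
  induction x using TensorAlgebra.induction with
  | algebraMap r => intro w; simp [Algebra.smul_def]
  | ι v => intro w; simp [recAct]
  | mul a b ha hb => intro w; rw [map_mul, Module.End.mul_apply, ha, hb, mul_assoc]
  | add a b ha hb => intro w; rw [map_add, LinearMap.add_apply, Prod.fst_add, ha, hb, add_mul]

lemma tRec_one {Q : Type} [AddCommGroup Q] [Module k Q] (q₀ : Q)
    (step : V →ₗ[k] (TensorAlgebra k V × Q) →ₗ[k] Q) : tRec q₀ step 1 = q₀ := by
  simp [tRec]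

lemma tRec_ι_mul {Q : Type} [AddCommGroup Q] [Module k Q] (q₀ : Q)
    (step : V →ₗ[k] (TensorAlgebra k V × Q) →ₗ[k] Q) (v : V) (x : TensorAlgebra k V) :
    tRec q₀ step (ι k v * x) = step v (x, tRec q₀ step x) := by
  have h := lift_recAct_fst step x (1, q₀)
  rw [mul_one] at h
  have h2 : lift k (recAct step) x (1, q₀) = (x, tRec q₀ step x) := Prod.ext h rfl
  change (lift k (recAct step) (ι k v * x) (1, q₀)).2 = _
  rw [map_mul, Module.End.mul_apply, h2, lift_ι_apply]
  rfl

/-- A linear map on the tensor algebra is determined by its values on `1` and on the `v x`. -/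
lemma tensorAlgebra_hom_ext {Q : Type} [AddCommGroup Q] [Module k Q]
    {φ ψ : TensorAlgebra k V →ₗ[k] Q} (h1 : φ 1 = ψ 1)
    (h2 : ∀ v x, φ x = ψ x → φ (ι k v * x) = ψ (ι k v * x)) : φ = ψ := by
  have key : ∀ x y : TensorAlgebra k V, φ y = ψ y → φ (x * y) = ψ (x * y) := by
    intro x
    induction x using TensorAlgebra.induction with
    | algebraMap r =>
      intro y hy
      rw [← Algebra.smul_def, map_smul, map_smul, hy]
    | ι v => exact h2 v
    | mul a b ha hb => intro y hy; rw [mul_assoc]; exact ha _ (hb _ hy)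
    | add a b ha hb => intro y hy; rw [add_mul, map_add, map_add, ha _ hy, hb _ hy]
  ext x
  simpa using key x 1 h1

/-- Splitting off the first letter: `1 ↦ 0` and `v x ↦ v ⊗ x`. -/
noncomputable def firstLetter : TensorAlgebra k V →ₗ[k] V ⊗[k] TensorAlgebra k V :=
  tRec 0 ((LinearMap.lcomp k _ (LinearMap.fst k _ _)) ∘ₗ TensorProduct.mk k V (TensorAlgebra k V))

lemma firstLetter_one : firstLetter (1 : TensorAlgebra k V) = 0 := tRec_one _ _

lemma firstLetter_ι_mul (v : V) (x : TensorAlgebra k V) :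
    firstLetter (ι k v * x) = v ⊗ₜ[k] x := tRec_ι_mul _ _ _ _

/-- The shift `φ ↦ id_V ⊗ φ`, that is `v x ↦ v φ(x)` and `1 ↦ 0`. -/
noncomputable def shiftFun (φ : Module.End k (TensorAlgebra k V)) :
    Module.End k (TensorAlgebra k V) :=
  TensorProduct.lift ((LinearMap.lcomp k _ φ) ∘ₗ (LinearMap.mul k (TensorAlgebra k V)) ∘ₗ ι k)
    ∘ₗ firstLetter

lemma shiftFun_one (φ : Module.End k (TensorAlgebra k V)) : shiftFun φ 1 = 0 := by
  simp [shiftFun, firstLetter_one]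

lemma shiftFun_ι_mul (φ : Module.End k (TensorAlgebra k V)) (v : V) (x : TensorAlgebra k V) :
    shiftFun φ (ι k v * x) = ι k v * φ x := by
  simp [shiftFun, firstLetter_ι_mul]

/-- The shift `φ ↦ id_V ⊗ φ` as a (non-unital) ring endomorphism: the shift of the identity is
the projection killing the scalars. -/
noncomputable def shift :
    Module.End k (TensorAlgebra k V) →ₙ+* Module.End k (TensorAlgebra k V) where
  toFun := shiftFun
  map_mul' φ ψ := by
    refine tensorAlgebra_hom_ext ?_ fun v x _ => ?_
    · simp [shiftFun_one]
    · simp [shiftFun_ι_mul]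
  map_zero' := by
    refine tensorAlgebra_hom_ext ?_ fun v x _ => ?_
    · simp [shiftFun_one]
    · simp [shiftFun_ι_mul]
  map_add' φ ψ := by
    refine tensorAlgebra_hom_ext ?_ fun v x _ => ?_
    · simp [shiftFun_one]
    · simp [shiftFun_ι_mul, mul_add]

lemma shift_one (φ : Module.End k (TensorAlgebra k V)) : shift φ 1 = 0 := shiftFun_one φ

lemma shift_ι_mul (φ : Module.End k (TensorAlgebra k V)) (v : V) (x : TensorAlgebra k V) :
    shift φ (ι k v * x) = ι k v * φ x := shiftFun_ι_mul φ v x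

/-- The sum `∑ t, (-1)^{td} s^t f` is locally finite on the tensor algebra, since `s^t f` kills words
with fewer than `t` letters; it is built here by recursion on the first letter. -/
lemma exists_isHat (d : ℤ) (f : Module.End k (TensorAlgebra k V)) : ∃ F, IsHat shift d F f := by
  let step : V →ₗ[k] (TensorAlgebra k V × TensorAlgebra k V) →ₗ[k] TensorAlgebra k V :=
    { toFun := fun v => (f ∘ₗ LinearMap.mulLeft k (ι k v)).coprod
        (sg d • LinearMap.mulLeft k (ι k v))
      map_add' := fun v w => by
        refine LinearMap.ext fun x => ?_
        simp [add_mul]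
        abel
      map_smul' := fun a v => by
        refine LinearMap.ext fun x => ?_
        simp [smul_add] }
  refine ⟨tRec (f 1) step, ?_⟩
  refine tensorAlgebra_hom_ext ?_ fun v x _ => ?_
  · simp [tRec_one, shift_one]
  · simp [tRec_ι_mul, shift_ι_mul, step]

/-- A multilinear map `V^m → T(V)`, applied to the first `m` letters (and zero on words with fewer
than `m` letters). -/
noncomputable def onFirst : (m : ℕ) →
    MultilinearMap k (fun _ : Fin m => V) (TensorAlgebra k V) →ₗ[k]
      Module.End k (TensorAlgebra k V)
  | 0 => LinearMap.mul k (TensorAlgebra k V) ∘ₗ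
      { toFun := fun f => f Fin.elim0, map_add' := fun _ _ => rfl, map_smul' := fun _ _ => rfl }
  | m + 1 => LinearMap.lcomp k _ firstLetter ∘ₗ
      (TensorProduct.lift.equiv (.id k) V _ _).toLinearMap ∘ₗ
      LinearMap.llcomp k V _ _ (onFirst m) ∘ₗ
      (multilinearCurryLeftEquiv k (fun _ : Fin (m + 1) => V) (TensorAlgebra k V)).toLinearMap

lemma onFirst_zero (f : MultilinearMap k (fun _ : Fin 0 => V) (TensorAlgebra k V))
    (y : TensorAlgebra k V) : onFirst 0 f y = f Fin.elim0 * y := rfl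

lemma onFirst_succ_one {m : ℕ}
    (f : MultilinearMap k (fun _ : Fin (m + 1) => V) (TensorAlgebra k V)) :
    onFirst (m + 1) f 1 = 0 := by
  simp [onFirst, firstLetter_one]

lemma onFirst_succ_ι_mul {m : ℕ}
    (f : MultilinearMap k (fun _ : Fin (m + 1) => V) (TensorAlgebra k V)) (v : V)
    (y : TensorAlgebra k V) :
    onFirst (m + 1) f (ι k v * y) = onFirst m (f.curryLeft v) y := by
  simp [onFirst, firstLetter_ι_mul]

lemma onFirst_tprod_mul (m : ℕ) (f : MultilinearMap k (fun _ : Fin m => V) (TensorAlgebra k V))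
    (v : Fin m → V) (y : TensorAlgebra k V) :
    onFirst m f (tprod k V m v * y) = f v * y := by
  induction m with
  | zero =>
    rw [onFirst_zero, tprod_apply, List.ofFn_zero, List.prod_nil, one_mul]
    congr 2
    exact Subsingleton.elim _ _
  | succ m ih =>
    have h : tprod k V (m + 1) v = ι k (v 0) * tprod k V m (Fin.tail v) := by
      rw [tprod_apply, tprod_apply, List.ofFn_succ, List.prod_cons]
      rfl
    rw [h, mul_assoc, onFirst_succ_ι_mul, ih, MultilinearMap.curryLeft_apply, Fin.cons_self_tail]

/-- The embedding of `V^{⊗n}` into the tensor algebra. -/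
noncomputable abbrev tau {n : ℕ} : TP k V n →ₗ[k] TensorAlgebra k V :=
  TensorPower.toTensorAlgebra

lemma tau_injective {n : ℕ} : Function.Injective (tau (k := k) (V := V) (n := n)) := by
  have h : ∀ x : TP k V n, tau x
      = ofDirectSum (DirectSum.of (fun n => TP k V n) n x) := fun x =>
    (DirectSum.toAddMonoid_of (fun _ => LinearMap.toAddMonoidHom TensorPower.toTensorAlgebra)
      _ _).symm
  intro x y hxy
  rw [h, h] at hxy
  exact DirectSum.of_injective n (equivDirectSum.symm.injective hxy)

lemma tau_tpe {a b : ℕ} (x : TP k V a) (y : TP k V b) :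
    tau (tpe k V a b (x ⊗ₜ y)) = tau x * tau y :=
  TensorPower.toTensorAlgebra_gMul x y

lemma shift_pow_tau_mul (i : ℕ) (φ : Module.End k (TensorAlgebra k V)) (u : TP k V i)
    (y : TensorAlgebra k V) : (shift ^ i) φ (tau u * y) = tau u * φ y := by
  induction u using PiTensorProduct.induction_on with
  | add u w hu hw => rw [map_add, add_mul, map_add, hu, hw, add_mul]
  | smul_tprod r v =>
    rw [map_smul, smul_mul_assoc, smul_mul_assoc, map_smul]
    congr 1
    rw [TensorPower.toTensorAlgebra_tprod]
    induction i generalizing y with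
    | zero => simp
    | succ i ih =>
      have h : tprod k V (i + 1) v = ι k (v 0) * tprod k V i (Fin.tail v) := by
        rw [tprod_apply, tprod_apply, List.ofFn_succ, List.prod_cons]
        rfl
      rw [h, mul_assoc, spow_succ_apply', shift_ι_mul, ih, mul_assoc]

/-- `f ⊗ id` commutes with operators acting to the right of its `m` inputs and `p` outputs. -/
lemma hasArity_onFirst {p : ℕ} (m : ℕ)
    (f : MultilinearMap k (fun _ : Fin m => V) (TensorAlgebra k V))
    (hf : ∀ v, ∃ u : TP k V p, f v = tau u) : HasArity shift m p (onFirst m f) := by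
  intro φ
  induction m with
  | zero =>
    refine LinearMap.ext fun y => ?_
    obtain ⟨u, hu⟩ := hf Fin.elim0
    rw [Module.End.mul_apply, Module.End.mul_apply, spow_zero_apply, onFirst_zero, onFirst_zero, hu,
      shift_pow_tau_mul]
  | succ m ih =>
    refine tensorAlgebra_hom_ext ?_ fun v x _ => ?_
    · rw [Module.End.mul_apply, Module.End.mul_apply, onFirst_succ_one, map_zero, spow_succ_apply',
        shift_one, map_zero]
    · rw [Module.End.mul_apply, Module.End.mul_apply, onFirst_succ_ι_mul, spow_succ_apply',
        shift_ι_mul, onFirst_succ_ι_mul]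
      exact LinearMap.congr_fun (ih (f.curryLeft v) fun w => hf (Fin.cons v w)) x

/-! ### Comparison with maps between tensor powers -/

/-- The operator `b` on the tensor algebra restricts to `f ⊗ id` on words with at least `m`
letters. Nothing is required of `b` on shorter words. -/
def Represents {m p : ℕ} (b : Module.End k (TensorAlgebra k V)) (f : TP k V m →ₗ[k] TP k V p) : Prop :=
  ∀ (v : TP k V m) (y : TensorAlgebra k V), b (tau v * y) = tau (f v) * y

lemma exists_represents {m p : ℕ} (f : TP k V m →ₗ[k] TP k V p) :
    ∃ b, Represents b f ∧ HasArity shift m p b := by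
  refine ⟨onFirst m ((tau ∘ₗ f).compMultilinearMap (PiTensorProduct.tprod k)), fun v y => ?_,
    hasArity_onFirst _ _ fun v => ⟨_, rfl⟩⟩
  induction v using PiTensorProduct.induction_on with
  | add u w hu hw => rw [map_add, add_mul, map_add, hu, hw, map_add, map_add, add_mul]
  | smul_tprod r v =>
    rw [map_smul, smul_mul_assoc, map_smul, map_smul, map_smul, smul_mul_assoc,
      TensorPower.toTensorAlgebra_tprod, onFirst_tprod_mul]
    rfl

/-- The case of no additional letters: `V^{⊗p}` embeds into the tensor algebra. -/
lemma Represents.eq_zero {m p : ℕ} {f : TP k V m →ₗ[k] TP k V p} (hf : Represents 0 f) : f = 0 := by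
  refine LinearMap.ext fun v => tau_injective ?_
  have := hf v 1
  rw [mul_one, mul_one] at this
  rw [← this]; simp

lemma Represents.add {m p : ℕ} {b c : Module.End k (TensorAlgebra k V)} {f g : TP k V m →ₗ[k] TP k V p}
    (hf : Represents b f) (hg : Represents c g) : Represents (b + c) (f + g) := fun v y => by
  rw [LinearMap.add_apply, LinearMap.add_apply, map_add, add_mul, hf, hg]

lemma Represents.zsmul {m p : ℕ} {b : Module.End k (TensorAlgebra k V)} {f : TP k V m →ₗ[k] TP k V p}
    (hf : Represents b f) (a : ℤ) : Represents (a • b) (a • f) := fun v y => by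
  have h : (a • f) v = a • f v := map_zsmul (LinearMap.applyₗ (R := k) v) a f
  rw [LinearMap.smul_apply, h, map_zsmul, smul_mul_assoc, hf]

lemma Represents.sub {m p : ℕ} {b c : Module.End k (TensorAlgebra k V)} {f g : TP k V m →ₗ[k] TP k V p}
    (hf : Represents b f) (hg : Represents c g) : Represents (b - c) (f - g) := fun v y => by
  rw [LinearMap.sub_apply, LinearMap.sub_apply, map_sub, sub_mul, hf, hg]

lemma Represents.sum {m p : ℕ} {α : Type} (t : Finset α) {b : α → Module.End k (TensorAlgebra k V)}
    {f : α → TP k V m →ₗ[k] TP k V p} (hf : ∀ i, Represents (b i) (f i)) :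
    Represents (∑ i ∈ t, b i) (∑ i ∈ t, f i) := fun v y => by
  rw [LinearMap.sum_apply, LinearMap.sum_apply, map_sum, Finset.sum_mul]
  exact Finset.sum_congr rfl fun i _ => hf i v y

lemma Represents.comp {m p q : ℕ} {b c : Module.End k (TensorAlgebra k V)} {f : TP k V q →ₗ[k] TP k V p}
    {g : TP k V m →ₗ[k] TP k V q} (hf : Represents b f) (hg : Represents c g) : Represents (b * c) (f ∘ₗ g) :=
  fun v y => by
  rw [Module.End.mul_apply, LinearMap.comp_apply, hg, hf]

lemma Represents.hcast {m p m' p' : ℕ} {b : Module.End k (TensorAlgebra k V)}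
    {f : TP k V m →ₗ[k] TP k V p} (hf : Represents b f) (h1 : m = m') (h2 : p = p') :
    Represents b (hcast k V m' p' h1 h2 f) := by
  subst h1; subst h2; exact hf

/-- To represent a map on `V^{⊗(a+c)}` it suffices to look at the tensors `u ⊗ w`. -/
lemma represents_of_tpe {a c p : ℕ} {b : Module.End k (TensorAlgebra k V)}
    {f : TP k V (a + c) →ₗ[k] TP k V p}
    (h : ∀ u w y, b (tau u * tau w * y) = tau (f (tpe k V a c (u ⊗ₜ w))) * y) : Represents b f := by
  intro v y
  obtain ⟨t, rfl⟩ := (tpe k V a c).surjective v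
  induction t using TensorProduct.induction_on with
  | zero => simp
  | tmul u w => rw [tau_tpe, h]
  | add x z hx hz => simp only [map_add, add_mul, hx, hz]

lemma Represents.tmul_id {m p : ℕ} {b : Module.End k (TensorAlgebra k V)} {f : TP k V m →ₗ[k] TP k V p}
    (hf : Represents b f) (c : ℕ) : Represents b (tmul2 k V f (LinearMap.id (M := TP k V c))) := by
  refine represents_of_tpe fun u w y => ?_
  simp only [tmul2, LinearMap.comp_apply, LinearEquiv.coe_coe, LinearEquiv.symm_apply_apply,
    TensorProduct.map_tmul, tau_tpe, LinearMap.id_apply]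
  rw [mul_assoc, hf, mul_assoc]

lemma Represents.id_tmul {m p : ℕ} {b : Module.End k (TensorAlgebra k V)} {f : TP k V m →ₗ[k] TP k V p}
    (hf : Represents b f) (i : ℕ) :
    Represents ((shift ^ i) b) (tmul2 k V (LinearMap.id (M := TP k V i)) f) := by
  refine represents_of_tpe fun u w y => ?_
  simp only [tmul2, LinearMap.comp_apply, LinearEquiv.coe_coe, LinearEquiv.symm_apply_apply,
    TensorProduct.map_tmul, tau_tpe, LinearMap.id_apply]
  rw [mul_assoc, shift_pow_tau_mul, hf, mul_assoc]

lemma Represents.star {m p n q : ℕ} (hm : 1 ≤ m) (hq : 1 ≤ q)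
    {b c : Module.End k (TensorAlgebra k V)} {f : TP k V m →ₗ[k] TP k V p}
    {g : TP k V n →ₗ[k] TP k V q} (hf : Represents b f) (hg : Represents c g) :
    Represents (aStar shift m p n q b c) (starOp k V hm hq f g) := by
  rw [aStar, Finset.sum_range, Finset.sum_range]
  refine Represents.hcast (Represents.add (Represents.sum _ fun i => Represents.zsmul ?_ _)
    (Represents.sum _ fun i => Represents.zsmul ?_ _)) _ _
  · exact (hf.tmul_id _).comp (((hg.id_tmul _).tmul_id _).hcast _ _)
  · exact ((((hf.id_tmul _).tmul_id _).hcast _ _).comp (hg.tmul_id _)).hcast _ _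

lemma Represents.brk {m p n q : ℕ} (hm : 1 ≤ m) (hp : 1 ≤ p) (hn : 1 ≤ n) (hq : 1 ≤ q)
    {b c : Module.End k (TensorAlgebra k V)} {f : TP k V m →ₗ[k] TP k V p}
    {g : TP k V n →ₗ[k] TP k V q} (hf : Represents b f) (hg : Represents c g) :
    Represents (aBrk shift m p n q b c) (brkOp k V hm hp hn hq f g) :=
  (hf.star hm hq hg).sub (((hg.star hn hp hf).hcast _ _).zsmul _)

end Operators

/-! ### The bracket on maps between tensor powers -/

lemma hcast_sub_zsmul {m p m' p' : ℕ} (h1 : m = m') (h2 : p = p') (a : ℤ)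
    (f g : TP k V m →ₗ[k] TP k V p) :
    hcast k V m' p' h1 h2 (f - a • g) = hcast k V m' p' h1 h2 f - a • hcast k V m' p' h1 h2 g := by
  subst h1; subst h2; rfl

lemma hcast_hcast_self {m p m' p' : ℕ} (h1 : m' = m) (h2 : p' = p) (h1' : m = m') (h2' : p = p')
    (f : TP k V m →ₗ[k] TP k V p) :
    hcast k V m p h1 h2 (hcast k V m' p' h1' h2' f) = f := by
  subst h1; subst h2; rfl

/-- the bracket `[f, g] = f ⋆ g − (−1)^{(m−p)(n−q)} g ⋆ f` on
`⊕_{m,p ≥ 1} End_V(m,p)` (graded by `deg f = m − p`) is graded antisymmetric and satisfies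
the graded Jacobi identity. -/
theorem end_bracket_graded_lie (k V : Type) [CommRing k] [AddCommGroup V] [Module k V]
    (m p n q l r : ℕ) (hm : 1 ≤ m) (hp : 1 ≤ p) (hn : 1 ≤ n) (hq : 1 ≤ q)
    (hl : 1 ≤ l) (hr : 1 ≤ r)
    (f : TP k V m →ₗ[k] TP k V p) (g : TP k V n →ₗ[k] TP k V q)
    (h : TP k V l →ₗ[k] TP k V r) :
    brkOp k V hm hp hn hq f g
        = -(((((m : ℤ) - (p : ℤ)) * ((n : ℤ) - (q : ℤ))).negOnePow : ℤ) •
            hcast k V (m + n - 1) (p + q - 1) (by omega) (by omega)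
              (brkOp k V hn hq hm hp g f))
      ∧ ((((((m : ℤ) - (p : ℤ)) * ((l : ℤ) - (r : ℤ))).negOnePow : ℤ) •
            hcast k V (m + n + l - 2) (p + q + r - 2) (by omega) (by omega)
              (brkOp k V (by omega) (by omega) hl hr (brkOp k V hm hp hn hq f g) h))
          + (((((n : ℤ) - (q : ℤ)) * ((m : ℤ) - (p : ℤ))).negOnePow : ℤ) •
              hcast k V (m + n + l - 2) (p + q + r - 2) (by omega) (by omega)
                (brkOp k V (by omega) (by omega) hm hp (brkOp k V hn hq hl hr g h) f))
          + (((((l : ℤ) - (r : ℤ)) * ((n : ℤ) - (q : ℤ))).negOnePow : ℤ) •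
              hcast k V (m + n + l - 2) (p + q + r - 2) (by omega) (by omega)
                (brkOp k V (by omega) (by omega) hn hq (brkOp k V hl hr hm hp h f) g))
        = 0) := by
  refine ⟨?_, ?_⟩
  · have hc : ((n : ℤ) - q) * ((m : ℤ) - p) = ((m : ℤ) - p) * ((n : ℤ) - q) := mul_comm _ _
    have hs := sg_mul_self (((m : ℤ) - p) * ((n : ℤ) - q))
    unfold brkOp
    rw [hcast_sub_zsmul, hcast_hcast_self, hc, zsmul_sub, smul_smul, hs, one_smul, neg_sub]
  · obtain ⟨a, ha, ha'⟩ := exists_represents f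
    obtain ⟨b, hb, hb'⟩ := exists_represents g
    obtain ⟨c, hc, hc'⟩ := exists_represents h
    obtain ⟨F, hF⟩ := exists_isHat ((m : ℤ) - p) a
    obtain ⟨G, hG⟩ := exists_isHat ((n : ℤ) - q) b
    obtain ⟨H, hH⟩ := exists_isHat ((l : ℤ) - r) c
    apply Represents.eq_zero
    rw [← aBrk_jacobi hm hp hn hq hl hr hF hG hH ha' hb' hc']
    exact (((((ha.brk hm hp hn hq hb).brk (by omega) (by omega) hl hr hc).hcast _ _).zsmul _).add
      ((((hb.brk hn hq hl hr hc).brk (by omega) (by omega) hm hp ha).hcast _ _).zsmul _)).add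
      ((((hc.brk hl hr hm hp ha).brk (by omega) (by omega) hn hq hb).hcast _ _).zsmul _)
end

section
/- Let k be a field of characteristic zero and V = k² with standard basis e₁, e₂. Then the maps F intertwine the combinatorial differential D with the tensor-product map: for all m, p ≥ 0 and every pair (w, u) of words over {1, 2} of lengths m and p, F_{m+1,p+1}(D_{m,p}(w, u)) = id_V ⊗ δ_{w,u} + (−1)^{p+m+1} δ_{w,u} ⊗ id_V in Hom_k(V^{⊗(m+1)}, V^{⊗(p+1)}), under the canonical isomorphisms V^{⊗(m+1)} ≅ V ⊗ V^{⊗m} ≅ V^{⊗m} ⊗ V and V^{⊗(p+1)} ≅ V ⊗ V^{⊗p} ≅ V^{⊗p} ⊗ V. -/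
/-!
Since `id_V = ∑ a, δ_{a,a}`, tensoring on the left gives `id_V ⊗ δ_{w,u} = ∑ a, δ_{aw,au}`
(`sum_deltaMap_cons`) and tensoring on the right gives `δ_{w,u} ⊗ id_V = ∑ a, δ_{wa,ua}`
(`sum_deltaMap_snoc`). The right-hand sides are the images under `F` of the two sums in
`D(w, u)`, so the theorem follows by linearity of `F`.
-/

/-- Words of length `m` over the alphabet `{1, 2}` (paths of length `m` in the
two-loops quiver). -/
abbrev Word (m : ℕ) := Fin m → Fin 2

/-- The `m`-th tensor power of `V = k²`, modelled concretely as the space of functions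
`(Fin m → Fin 2) → k`, with basis `e_w` (the indicator of the word `w`) corresponding to
the basis tensor `e_{w₁} ⊗ ⋯ ⊗ e_{w_m}`. -/
abbrev TPow (k : Type) [Field k] (m : ℕ) := Word m → k

/-- The linear map `δ_{w,u} : V^{⊗m} → V^{⊗p}` sending the basis tensor indexed by `w`
to the basis tensor indexed by `u` and every other basis tensor to `0`. -/
def deltaMap (k : Type) [Field k] {m p : ℕ} (w : Word m) (u : Word p) :
    TPow k m →ₗ[k] TPow k p where
  toFun f := fun x => if x = u then f w else 0
  map_add' f g := by funext x; by_cases h : x = u <;> simp [h]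
  map_smul' c f := by funext x; by_cases h : x = u <;> simp [h]

/-- `id_V ⊗ g : V^{⊗(m+1)} → V^{⊗(p+1)}`, under the canonical identifications
`V^{⊗(m+1)} ≅ V ⊗ V^{⊗m}` and `V^{⊗(p+1)} ≅ V ⊗ V^{⊗p}`. -/
def idTensor (k : Type) [Field k] {m p : ℕ} (g : TPow k m →ₗ[k] TPow k p) :
    TPow k (m + 1) →ₗ[k] TPow k (p + 1) where
  toFun f := fun y => g (fun x => f (Fin.cons (y 0) x)) (Fin.tail y)
  map_add' f₁ f₂ := by
    funext y
    show g (fun x => (f₁ + f₂) (Fin.cons (y 0) x)) (Fin.tail y)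
        = g (fun x => f₁ (Fin.cons (y 0) x)) (Fin.tail y)
          + g (fun x => f₂ (Fin.cons (y 0) x)) (Fin.tail y)
    rw [show (fun x => (f₁ + f₂) (Fin.cons (y 0) x))
        = (fun x => f₁ (Fin.cons (y 0) x)) + fun x => f₂ (Fin.cons (y 0) x) from rfl,
      map_add]
    rfl
  map_smul' c f := by
    funext y
    show g (fun x => (c • f) (Fin.cons (y 0) x)) (Fin.tail y)
        = c • g (fun x => f (Fin.cons (y 0) x)) (Fin.tail y)
    rw [show (fun x => (c • f) (Fin.cons (y 0) x))
        = c • fun x => f (Fin.cons (y 0) x) from rfl, map_smul]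
    rfl

/-- `g ⊗ id_V : V^{⊗(m+1)} → V^{⊗(p+1)}`, under the canonical identifications
`V^{⊗(m+1)} ≅ V^{⊗m} ⊗ V` and `V^{⊗(p+1)} ≅ V^{⊗p} ⊗ V`. -/
def tensorId (k : Type) [Field k] {m p : ℕ} (g : TPow k m →ₗ[k] TPow k p) :
    TPow k (m + 1) →ₗ[k] TPow k (p + 1) where
  toFun f := fun y => g (fun x => f (Fin.snoc x (y (Fin.last p)))) (Fin.init y)
  map_add' f₁ f₂ := by
    funext y
    show g (fun x => (f₁ + f₂) (Fin.snoc x (y (Fin.last p)))) (Fin.init y)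
        = g (fun x => f₁ (Fin.snoc x (y (Fin.last p)))) (Fin.init y)
          + g (fun x => f₂ (Fin.snoc x (y (Fin.last p)))) (Fin.init y)
    rw [show (fun x => (f₁ + f₂) (Fin.snoc x (y (Fin.last p))))
        = (fun x => f₁ (Fin.snoc x (y (Fin.last p))))
          + fun x => f₂ (Fin.snoc x (y (Fin.last p))) from rfl,
      map_add]
    rfl
  map_smul' c f := by
    funext y
    show g (fun x => (c • f) (Fin.snoc x (y (Fin.last p)))) (Fin.init y)
        = c • g (fun x => f (Fin.snoc x (y (Fin.last p)))) (Fin.init y)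
    rw [show (fun x => (c • f) (Fin.snoc x (y (Fin.last p))))
        = c • fun x => f (Fin.snoc x (y (Fin.last p))) from rfl, map_smul]
    rfl

/-- The combinatorial differential `D_{m,p}` on the span of pairs of parallel paths in the
two-loops quiver: `D_{m,p}(w, u) = Σ_{a} (aw, au) + (−1)^{p+m+1} Σ_{a} (wa, ua)`. -/
noncomputable def D2 (k : Type) [Field k] (m p : ℕ) :
    ((Word m × Word p) →₀ k) →ₗ[k] ((Word (m + 1) × Word (p + 1)) →₀ k) :=
  Finsupp.lift _ k _ fun x =>
    (∑ a : Fin 2, Finsupp.single (Fin.cons a x.1, Fin.cons a x.2) (1 : k))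
      + ((-1 : k) ^ (p + m + 1)) •
        ∑ a : Fin 2, Finsupp.single (Fin.snoc x.1 a, Fin.snoc x.2 a) (1 : k)

/-- The linear map `F_{m,p} : k(Q_m//Q_p) → Hom_k(V^{⊗m}, V^{⊗p})`, `(w,u) ↦ δ_{w,u}`. -/
noncomputable def F2 (k : Type) [Field k] (m p : ℕ) :
    ((Word m × Word p) →₀ k) →ₗ[k] (TPow k m →ₗ[k] TPow k p) :=
  Finsupp.lift _ k _ fun x => deltaMap k x.1 x.2

/-- The identity of `V` decomposes as `∑ a, δ_{a,a}`, and `δ_{a,a} ⊗ δ_{w,u} = δ_{aw,au}`. On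
coordinates: of the summands at a word `y`, only the one with `a = y 0` can be nonzero. -/
theorem sum_deltaMap_cons (k : Type) [Field k] {m p : ℕ} (w : Word m) (u : Word p) :
    ∑ a : Fin 2, deltaMap k (Fin.cons a w : Word (m + 1)) (Fin.cons a u : Word (p + 1))
      = idTensor k (deltaMap k w u) := by
  refine LinearMap.ext fun f => funext fun y => ?_
  obtain ⟨b, t, rfl⟩ : ∃ (b : Fin 2) (t : Word p), y = Fin.cons b t :=
    ⟨y 0, Fin.tail y, (Fin.cons_self_tail y).symm⟩
  simp [deltaMap, idTensor, Fin.cons_inj, ite_and]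
  fin_cases b <;> simp

/-- The mirror image of `sum_deltaMap_cons`: only the summand with `a` the last letter of `y`
can be nonzero. -/
theorem sum_deltaMap_snoc (k : Type) [Field k] {m p : ℕ} (w : Word m) (u : Word p) :
    ∑ a : Fin 2, deltaMap k (Fin.snoc w a : Word (m + 1)) (Fin.snoc u a : Word (p + 1))
      = tensorId k (deltaMap k w u) := by
  refine LinearMap.ext fun f => funext fun y => ?_
  obtain ⟨t, b, rfl⟩ : ∃ (t : Word p) (b : Fin 2), y = Fin.snoc t b :=
    ⟨Fin.init y, y (Fin.last p), (Fin.snoc_init_self y).symm⟩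
  simp [deltaMap, tensorId, Fin.snoc_inj, ite_and]
  fin_cases b <;> simp

theorem F2_single (k : Type) [Field k] {m p : ℕ} (w : Word m) (u : Word p) :
    F2 k m p (Finsupp.single (w, u) 1) = deltaMap k w u := by
  simp [F2]

theorem D2_single (k : Type) [Field k] {m p : ℕ} (w : Word m) (u : Word p) :
    D2 k m p (Finsupp.single (w, u) 1)
      = (∑ a : Fin 2, Finsupp.single (Fin.cons a w, Fin.cons a u) (1 : k))
        + ((-1 : k) ^ (p + m + 1)) •
          ∑ a : Fin 2, Finsupp.single (Fin.snoc w a, Fin.snoc u a) (1 : k) := by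
  rw [D2, Finsupp.lift_apply, Finsupp.sum_single_index, one_smul]
  exact zero_smul k _

/-- for `k` of characteristic zero and `V = k²`, the maps `F` intertwine the
combinatorial differential `D` with the tensor-product map:
`F_{m+1,p+1}(D_{m,p}(w, u)) = id_V ⊗ δ_{w,u} + (−1)^{p+m+1} δ_{w,u} ⊗ id_V`. -/
theorem F_intertwines_D (k : Type) [Field k] [CharZero k] (m p : ℕ)
    (w : Word m) (u : Word p) :
    F2 k (m + 1) (p + 1) (D2 k m p (Finsupp.single (w, u) 1))
      = idTensor k (deltaMap k w u)
        + ((-1 : k) ^ (p + m + 1)) • tensorId k (deltaMap k w u) := by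
  rw [← sum_deltaMap_cons, ← sum_deltaMap_snoc]
  simp only [D2_single, map_add, map_smul, map_sum, F2_single]
end

section
/- Let k be a field of characteristic zero and V = k². For m, p ≥ 1 define φ_{m,p} : Hom_k(V^{⊗m}, V^{⊗p}) → Hom_k(V^{⊗(m+1)}, V^{⊗(p+1)}) by φ_{m,p}(f) = id_V ⊗ f + (−1)^{p+m+1} f ⊗ id_V. Then φ_{m,p} is injective whenever m ≠ p, and for m = p the kernel of φ_{m,m} is the one-dimensional subspace spanned by the identity map of V^{⊗m}. -/
/-- `φ_{m,p} : Hom_k(V^{⊗m}, V^{⊗p}) → Hom_k(V^{⊗(m+1)}, V^{⊗(p+1)})`,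
`φ_{m,p}(f) = id_V ⊗ f + (−1)^{p+m+1} f ⊗ id_V`. -/
noncomputable def phiMap (k : Type) [Field k] (m p : ℕ) :
    (TPow k m →ₗ[k] TPow k p) →ₗ[k] (TPow k (m + 1) →ₗ[k] TPow k (p + 1)) where
  toFun g := idTensor k g + ((-1 : k) ^ (p + m + 1)) • tensorId k g
  map_add' g₁ g₂ := by
    refine LinearMap.ext fun f => ?_
    funext y
    show (g₁ + g₂) (fun x => f (Fin.cons (y 0) x)) (Fin.tail y)
        + (-1 : k) ^ (p + m + 1)
          * (g₁ + g₂) (fun x => f (Fin.snoc x (y (Fin.last p)))) (Fin.init y)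
      = (g₁ (fun x => f (Fin.cons (y 0) x)) (Fin.tail y)
          + (-1 : k) ^ (p + m + 1)
            * g₁ (fun x => f (Fin.snoc x (y (Fin.last p)))) (Fin.init y))
        + (g₂ (fun x => f (Fin.cons (y 0) x)) (Fin.tail y)
          + (-1 : k) ^ (p + m + 1)
            * g₂ (fun x => f (Fin.snoc x (y (Fin.last p)))) (Fin.init y))
    simp only [LinearMap.add_apply, Pi.add_apply]
    ring
  map_smul' c g := by
    refine LinearMap.ext fun f => ?_
    funext y
    show (c • g) (fun x => f (Fin.cons (y 0) x)) (Fin.tail y)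
        + (-1 : k) ^ (p + m + 1)
          * (c • g) (fun x => f (Fin.snoc x (y (Fin.last p)))) (Fin.init y)
      = c * (g (fun x => f (Fin.cons (y 0) x)) (Fin.tail y)
          + (-1 : k) ^ (p + m + 1)
            * g (fun x => f (Fin.snoc x (y (Fin.last p)))) (Fin.init y))
    simp only [LinearMap.smul_apply, Pi.smul_apply, smul_eq_mul]
    ring

/-- The matrix entry of `g` at the length-`m` prefix of `α` and the length-`p` prefix of `β`.
Infinite sequences make "delete the first letter and append one" a plain shift. -/
def entry {k : Type} [Field k] {m p : ℕ} (g : TPow k m →ₗ[k] TPow k p) (α β : ℕ → Fin 2) : k :=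
  g (Pi.single (fun i : Fin m => α i) 1) (fun i : Fin p => β i)

/-- The entry of `φ(g) = 0` at the prefixes of lengths `m + 1` and `p + 1`, when these prefixes
have the same last letter. -/
lemma entry_step {k : Type} [Field k] {m p : ℕ} {g : TPow k m →ₗ[k] TPow k p}
    (hg : phiMap k m p g = 0) (α β : ℕ → Fin 2) (h : α m = β p) :
    (if α 0 = β 0 then entry g (fun i => α (i + 1)) (fun i => β (i + 1)) else 0)
      + (-1 : k) ^ (p + m + 1) * entry g α β = 0 := by
  have key := congrFun (LinearMap.congr_fun hg
    (Pi.single (fun i : Fin (m + 1) => α i) 1)) (fun i : Fin (p + 1) => β i)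
  have key' : g (fun x => (Pi.single (fun i : Fin (m + 1) => α i) 1 : TPow k (m + 1))
        (Fin.cons (β 0) x)) (fun i : Fin p => β (i + 1))
      + (-1 : k) ^ (p + m + 1) * g (fun x => (Pi.single (fun i : Fin (m + 1) => α i) 1 :
        TPow k (m + 1)) (Fin.snoc x (β p))) (fun i : Fin p => β i) = 0 := key
  have h1 : (fun x => (Pi.single (fun i : Fin (m + 1) => α i) 1 : TPow k (m + 1))
        (Fin.cons (β 0) x))
      = if α 0 = β 0 then Pi.single (fun i : Fin m => α (i + 1)) 1 else 0 := by
    have e : (fun i : Fin (m + 1) => α i)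
        = (Fin.cons (α 0) (fun i : Fin m => α (i + 1)) : Word (m + 1)) := by
      funext i
      refine Fin.cases ?_ (fun j => ?_) i <;> simp
    funext x
    rw [e]
    by_cases h0 : α 0 = β 0
    · simp [h0, Pi.single_apply, Fin.cons_inj]
    · simp [h0, Fin.cons_inj, Ne.symm h0]
  have h2 : (fun x => (Pi.single (fun i : Fin (m + 1) => α i) 1 : TPow k (m + 1))
        (Fin.snoc x (β p)))
      = Pi.single (fun i : Fin m => α i) 1 := by
    have e : (fun i : Fin (m + 1) => α i)
        = (Fin.snoc (fun i : Fin m => α i) (β p) : Word (m + 1)) := by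
      funext i
      refine Fin.lastCases ?_ (fun j => ?_) i <;> simp [h]
    funext x
    rw [e]
    simp [Pi.single_apply, Fin.snoc_inj]
  rw [h1, h2] at key'
  by_cases h0 : α 0 = β 0
  · simpa [h0, entry] using key'
  · simpa [h0, entry] using key'

lemma entry_eq_zero {k : Type} [Field k] {m p : ℕ} {g : TPow k m →ₗ[k] TPow k p}
    (hg : phiMap k m p g = 0) (n : ℕ) (α β : ℕ → Fin 2)
    (h : ∀ i, α (m + i) = β (p + i)) (hn : α n ≠ β n) : entry g α β = 0 := by
  induction n generalizing α β with
  | zero => simpa [hn] using entry_step hg α β (h 0)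
  | succ n ih =>
    have := entry_step hg α β (h 0)
    rw [ih (fun i => α (i + 1)) (fun i => β (i + 1)) (fun i => h (i + 1)) hn] at this
    simpa using this

lemma entry_diag {k : Type} [Field k] {m : ℕ} {g : TPow k m →ₗ[k] TPow k m}
    (hg : phiMap k m m g = 0) (n : ℕ) (α : ℕ → Fin 2) :
    entry g α α = entry g (fun i => α (i + n)) (fun i => α (i + n)) := by
  induction n with
  | zero => rfl
  | succ n ih =>
    have := entry_step hg (fun i => α (i + n)) (fun i => α (i + n)) rfl
    have e : (-1 : k) ^ (m + m + 1) = -1 := Odd.neg_one_pow ⟨m, by ring⟩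
    rw [if_pos rfl, e] at this
    rw [ih]
    have e2 : (fun i => α (i + (n + 1))) = fun i => α (i + 1 + n) := by
      funext i; congr 1; ring
    rw [e2]
    linear_combination -this

/-- The infinite sequence consisting of the word `w`, then the letter `x`, then zeros. -/
def extendWord {m : ℕ} (w : Word m) (x : Fin 2) (i : ℕ) : Fin 2 :=
  if h : i < m then w ⟨i, h⟩ else if i = m then x else 0

lemma extendWord_add {m p : ℕ} (w : Word m) (u : Word p) (x : Fin 2) (i : ℕ) :
    extendWord w x (m + i) = extendWord u x (p + i) := by
  simp [extendWord]

lemma entry_extendWord {k : Type} [Field k] {m p : ℕ} (g : TPow k m →ₗ[k] TPow k p)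
    (w : Word m) (u : Word p) (x y : Fin 2) :
    entry g (extendWord w x) (extendWord u y) = g (Pi.single w 1) u := by
  simp [entry, extendWord]

lemma phi_ker_of_ne {k : Type} [Field k] {m p : ℕ} (hmp : m ≠ p) {g : TPow k m →ₗ[k] TPow k p}
    (hg : phiMap k m p g = 0) : g = 0 := by
  refine LinearMap.pi_ext' fun w => LinearMap.ext_ring ?_
  funext u
  change g (Pi.single w 1) u = 0
  -- In `Fin 2`, adding `1` swaps the two letters; the first appended letter is chosen to differ
  -- from the letter of the longer word at the position where the shorter word ends.
  rcases lt_or_gt_of_ne hmp with h | h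
  · rw [← entry_extendWord g w u (u ⟨m, h⟩ + 1) (u ⟨m, h⟩ + 1)]
    refine entry_eq_zero hg m _ _ (extendWord_add w u _) ?_
    simp [extendWord, h]
  · rw [← entry_extendWord g w u (w ⟨p, h⟩ + 1) (w ⟨p, h⟩ + 1)]
    refine entry_eq_zero hg p _ _ (extendWord_add w u _) ?_
    simp [extendWord, h]

lemma phi_ker_self {k : Type} [Field k] {m : ℕ} {g : TPow k m →ₗ[k] TPow k m}
    (hg : phiMap k m m g = 0) :
    g (Pi.single 0 1) 0 • (LinearMap.id : TPow k m →ₗ[k] TPow k m) = g := by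
  refine LinearMap.pi_ext' fun w => LinearMap.ext_ring ?_
  funext u
  change g (Pi.single 0 1) 0 * (Pi.single w 1 : TPow k m) u = g (Pi.single w 1) u
  by_cases h : u = w
  · subst h
    rw [← entry_extendWord g u u 0 0, entry_diag hg m]
    simp [extendWord, entry]
    rfl
  · obtain ⟨i, hi⟩ := Function.ne_iff.mp h
    rw [← entry_extendWord g w u 0 0, entry_eq_zero hg i _ _ (extendWord_add w u _)]
    · simp [h]
    · simpa [extendWord] using Ne.symm hi

lemma phi_id (k : Type) [Field k] (m : ℕ) :
    phiMap k m m (LinearMap.id : TPow k m →ₗ[k] TPow k m) = 0 := by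
  refine LinearMap.ext fun f => ?_
  funext y
  change f (Fin.cons (y 0) (Fin.tail y))
    + (-1 : k) ^ (m + m + 1) * f (Fin.snoc (Fin.init y) (y (Fin.last m))) = 0
  have e : (-1 : k) ^ (m + m + 1) = -1 := Odd.neg_one_pow ⟨m, by ring⟩
  rw [e, Fin.cons_self_tail, Fin.snoc_init_self]
  ring

/-- for `k` of characteristic zero and `V = k²`, the map `φ_{m,p}` is
injective whenever `m ≠ p`, and for `m = p` the kernel of `φ_{m,m}` is the one-dimensional
subspace spanned by the identity map of `V^{⊗m}`. -/
theorem phi_injective_and_kernel (k : Type) [Field k] [CharZero k]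
    (m p : ℕ) (hm : 1 ≤ m) (hp : 1 ≤ p) :
    (m ≠ p → Function.Injective ⇑(phiMap k m p))
      ∧ LinearMap.ker (phiMap k m m)
          = Submodule.span k {(LinearMap.id : TPow k m →ₗ[k] TPow k m)}
      ∧ Module.finrank k (LinearMap.ker (phiMap k m m)) = 1 := by
  have hker : LinearMap.ker (phiMap k m m)
      = Submodule.span k {(LinearMap.id : TPow k m →ₗ[k] TPow k m)} := by
    apply le_antisymm
    · intro g hg
      exact Submodule.mem_span_singleton.mpr ⟨_, phi_ker_self (LinearMap.mem_ker.mp hg)⟩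
    · rw [Submodule.span_singleton_le_iff_mem]
      exact phi_id k m
  refine ⟨fun hmp => ?_, hker, ?_⟩
  · rw [← LinearMap.ker_eq_bot, LinearMap.ker_eq_bot']
    exact fun g hg => phi_ker_of_ne hmp hg
  · rw [hker]
    refine finrank_span_singleton fun h => ?_
    have := congrFun (LinearMap.congr_fun h (fun _ => (1 : k))) 0
    exact one_ne_zero this
end
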